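/- arXiv:2105.00237 — 8 statements merged into one kernel-verified Lean document; each statement's English description precedes it below -/
import Mathlib

section
/- Let (W, cs) be a Coxeter system over a Coxeter matrix M indexed by a type B, fix i₀ ∈ B, and let P := Subgroup.closure {cs.simple j | j ∈ B, j ≠ i₀} be the standard parabolic subgroup omitting i₀. Then the intersection of P with the centralizer of the simple reflection cs.simple i₀ is exactly the standard parabolic subgroup generated by those simple reflections cs.simple j with j ≠ i₀ that commute with cs.simple i₀, i.e. P ⊓ Subgroup.centralizer {cs.simple i₀} = Subgroup.closure {cs.simple j | j ∈ B, j ≠ i₀, cs.simple j * cs.simple i₀ = cs.simple i₀ * cs.simple j}. -/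
/-! Write `s = cs.simple i₀`, let `J` be the complement of `i₀`, and let `ω` be a word in `J` whose
product `w` commutes with `s`. The proof is by induction on the length of `ω`; let `j` be its last
letter.

* **Parity of inversions** (`count_rightInvSeq_eq`). For a word `ω` and `t : W`, the parity of the
  number of occurrences of `t` in the right inversion sequence of `ω` depends only on the product
  of `ω`: it is read off the action of `W` on `W × ZMod 2` in which `sᵢ` sends `(t, e)` to
  `(sᵢ t sᵢ, e + [t = sᵢ])`.
* If `sⱼ` already occurs in the right inversion sequence of `ω` without its last letter, then two
  letters of `ω` can be deleted without changing `w`, and induction applies. Otherwise `sⱼ` occurs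
  exactly once in the right inversion sequence of `ω`. Comparing the words `s ω` and `ω s`, which
  have the same product, shows that `s sⱼ s` occurs an odd number of times in the right inversion
  sequence of `ω`. All terms of that sequence lie in `W_J`, so `s sⱼ s ∈ W_J`.
* **Reflection representation** (`reflRep`). `W` acts on the real vector space with basis `B`, and
  elements of `W_J` do not change the coordinate at `i₀`. Applying `s sⱼ s` to the vector `s eⱼ`
  negates it, so its `i₀`-coordinate `2 cos (π / M i₀ j)` vanishes; this forces `M i₀ j = 2`, that
  is, `sⱼ` commutes with `s` (`commute_of_conj_mem`).
* Hence `w sⱼ` commutes with `s` as well and is given by a shorter word in `J`, so induction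
  applies again.
-/

namespace CoxeterCentralizer

open List Module Polynomial.Chebyshev

variable {B W : Type*} [Group W] {M : CoxeterMatrix B}

/-! ### Parity of right inversion sequences -/

open Classical in
/-- The map `(t, e) ↦ (sᵢ t sᵢ, e + [t = sᵢ])` on `W × ZMod 2`. The first component ranges over
all of `W` rather than only over the reflections. -/
noncomputable def signFlip (cs : CoxeterSystem M W) (i : B) : Function.End (W × ZMod 2) :=
  fun p => (cs.simple i * p.1 * cs.simple i, p.2 + if p.1 = cs.simple i then 1 else 0)

open Classical in
/-- With `g = sᵢ sⱼ`, the contributions to the second component come from the elements `sⱼ gᵏ`,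
`k < 2n`. -/
lemma flip_pow (cs : CoxeterSystem M W) (i j : B) (n : ℕ) (t : W) (e : ZMod 2) :
    ((signFlip cs i * signFlip cs j) ^ n) (t, e) =
      ((cs.simple i * cs.simple j) ^ n * t * ((cs.simple i * cs.simple j) ^ n)⁻¹,
        e + ∑ k ∈ Finset.range (2 * n),
          if t = cs.simple j * (cs.simple i * cs.simple j) ^ k then 1 else 0) := by
  have hinv : ∀ k : ℕ, ((cs.simple i * cs.simple j) ^ k)⁻¹ * cs.simple j =
      cs.simple j * (cs.simple i * cs.simple j) ^ k := by
    intro k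
    have h : SemiconjBy (cs.simple j) (cs.simple i * cs.simple j)
        (cs.simple i * cs.simple j)⁻¹ := by
      simp [SemiconjBy, mul_assoc]
    have h2 := (h.pow_right k).eq
    rw [h2, inv_pow]
  induction n with
  | zero =>
    simp
    rfl
  | succ n ih =>
    have h1 : (cs.simple i * cs.simple j) ^ n * t * ((cs.simple i * cs.simple j) ^ n)⁻¹ =
        cs.simple j ↔ t = cs.simple j * (cs.simple i * cs.simple j) ^ (2 * n) := by
      rw [mul_inv_eq_iff_eq_mul, ← eq_inv_mul_iff_mul_eq, ← mul_assoc, hinv, mul_assoc, ← pow_add,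
        two_mul]
    have h2 : cs.simple j * ((cs.simple i * cs.simple j) ^ n * t *
        ((cs.simple i * cs.simple j) ^ n)⁻¹) * cs.simple j =
        cs.simple i ↔ t = cs.simple j * (cs.simple i * cs.simple j) ^ (2 * n + 1) := by
      have : cs.simple j * ((cs.simple i * cs.simple j) ^ n * t *
        ((cs.simple i * cs.simple j) ^ n)⁻¹) * cs.simple j = cs.simple i ↔
          (cs.simple i * cs.simple j) ^ n * t * ((cs.simple i * cs.simple j) ^ n)⁻¹ =
          cs.simple j * (cs.simple i * cs.simple j) := by
        constructor
        · intro h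
          conv_rhs => enter [2, 1]; rw [← h]
          rw [cs.simple_mul_simple_cancel_right, cs.simple_mul_simple_cancel_left]
        · intro h
          rw [h]
          simp
      rw [this, mul_inv_eq_iff_eq_mul, ← eq_inv_mul_iff_mul_eq, ← mul_assoc, ← mul_assoc, hinv,
        mul_assoc, mul_assoc, ← pow_succ', ← pow_add]
      congr! 3
      omega
    rw [pow_succ']
    change (signFlip cs i) ((signFlip cs j) (((signFlip cs i * signFlip cs j) ^ n) (t, e))) = _
    rw [ih]
    simp only [signFlip]
    rw [show 2 * (n + 1) = 2 * n + 1 + 1 by ring, Finset.sum_range_succ, Finset.sum_range_succ]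
    simp only [h1, h2, Prod.mk.injEq]
    constructor
    · rw [pow_succ']
      simp [mul_assoc]
    · ring

lemma flip_isLiftable (cs : CoxeterSystem M W) : M.IsLiftable (signFlip cs) := by
  classical
  intro i j
  funext p
  obtain ⟨t, e⟩ := p
  rw [flip_pow]
  have hz : ∀ x : ZMod 2, x + x = 0 := by decide
  rw [two_mul, Finset.sum_range_add]
  simp only [pow_add, cs.simple_mul_simple_pow, one_mul, mul_one, inv_one, hz, add_zero]
  rfl

/-- The action of `W` on `W × ZMod 2` in which each simple reflection acts by `signFlip`. -/
noncomputable def flipHom (cs : CoxeterSystem M W) : W →* Function.End (W × ZMod 2) :=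
  cs.lift ⟨signFlip cs, flip_isLiftable cs⟩

open Classical in
lemma flipHom_wordProd (cs : CoxeterSystem M W) (ω : List B) (t : W) :
    flipHom cs (cs.wordProd ω) (t, 0) =
      (cs.wordProd ω * t * (cs.wordProd ω)⁻¹, ((cs.rightInvSeq ω).count t : ZMod 2)) := by
  induction ω with
  | nil => simp; rfl
  | cons i ω ih =>
    rw [cs.wordProd_cons, map_mul]
    change flipHom cs (cs.simple i) (flipHom cs (cs.wordProd ω) (t, 0)) = _
    rw [ih, flipHom, cs.lift_apply_simple]
    have h : cs.wordProd ω * t * (cs.wordProd ω)⁻¹ = cs.simple i ↔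
        (cs.wordProd ω)⁻¹ * cs.simple i * cs.wordProd ω = t := by
      constructor
      · intro h
        rw [← h]
        simp [mul_assoc]
      · intro h
        rw [← h]
        simp [mul_assoc]
    simp only [signFlip, CoxeterSystem.rightInvSeq, List.count_cons, h, beq_iff_eq]
    simp [mul_assoc]

open Classical in
/-- The parity of the multiplicity of `t` in the right inversion sequence of a word depends only on
the product of the word. -/
lemma count_rightInvSeq_eq (cs : CoxeterSystem M W) {ω ω' : List B}
    (h : cs.wordProd ω = cs.wordProd ω') (t : W) :
    ((cs.rightInvSeq ω).count t : ZMod 2) = (cs.rightInvSeq ω').count t := by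
  have h1 := flipHom_wordProd cs ω t
  rw [h, flipHom_wordProd] at h1
  exact (congrArg Prod.snd h1).symm

/-! ### The reflection representation -/

/-- The linear form `2 B(eᵢ, ·)`, where `B(eᵢ, eⱼ) = - cos (π / M i j)` is the standard bilinear
form. When `M i j = 0`, the convention `π / 0 = 0` gives the usual value `B(eᵢ, eⱼ) = -1`. -/
noncomputable def coroot (M : CoxeterMatrix B) (i : B) : Dual ℝ (B →₀ ℝ) :=
  Finsupp.linearCombination ℝ fun j => -2 * Real.cos (Real.pi / M i j)

lemma coroot_single (i j : B) :
    coroot M i (Finsupp.single j 1) = -2 * Real.cos (Real.pi / M i j) := by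
  simp [coroot]

lemma coroot_self (M : CoxeterMatrix B) (i : B) : coroot M i (Finsupp.single i 1) = 2 := by
  simp [coroot_single]

/-- The reflections of the standard representation satisfy the Coxeter relations: `rᵢ rⱼ` acts as a
rotation by `2π / M i j`, so the Chebyshev values in Mathlib's formula for `(rᵢ rⱼ) ^ M i j` are
values of the sine function. -/
lemma reflection_isLiftable (M : CoxeterMatrix B) :
    M.IsLiftable fun i => reflection (coroot_self M i) := by
  intro i j
  rcases eq_or_ne i j with rfl | hij
  · ext1 z
    simp [involutive_reflection (coroot_self M i) z]
  have h1 := M.off_diagonal i j hij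
  have hsym := M.symmetric i j
  ext1 z
  generalize hm : M i j = m at *
  rcases Nat.eq_zero_or_pos m with h0 | hpos
  · subst h0
    simp
  have ht : 2 * Real.cos (2 * Real.pi / m) =
      coroot M i (Finsupp.single j 1) * coroot M j (Finsupp.single i 1) - 2 := by
    rw [coroot_single, coroot_single, hm, ← hsym, mul_div_assoc, Real.cos_two_mul]
    ring
  rw [reflection_mul_reflection_pow_apply _ _ m z _ ht]
  rcases eq_or_ne m 2 with h2 | h2
  · subst h2
    have hi : coroot M i (Finsupp.single j 1) = 0 := by simp [coroot_single, hm]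
    have hj : coroot M j (Finsupp.single i 1) = 0 := by simp [coroot_single, ← hsym]
    rw [hi, hj]
    norm_num
    module
  have hm3 : 3 ≤ m := by omega
  have hmR : (3 : ℝ) ≤ m := by exact_mod_cast hm3
  have hm0 : (m : ℝ) ≠ 0 := by positivity
  have hsin : Real.sin (2 * Real.pi / m) ≠ 0 := by
    apply ne_of_gt
    apply Real.sin_pos_of_pos_of_lt_pi (by positivity)
    rw [div_lt_iff₀ (by positivity)]
    nlinarith [Real.pi_pos]
  have key : (S ℝ ((m - 2) / 2)).eval (2 * Real.cos (2 * Real.pi / m)) *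
        ((S ℝ ((m - 1) / 2)).eval (2 * Real.cos (2 * Real.pi / m)) +
          (S ℝ ((m - 3) / 2)).eval (2 * Real.cos (2 * Real.pi / m))) = 0 ∧
      (S ℝ ((m - 1) / 2)).eval (2 * Real.cos (2 * Real.pi / m)) *
        ((S ℝ (m / 2)).eval (2 * Real.cos (2 * Real.pi / m)) +
          (S ℝ ((m - 2) / 2)).eval (2 * Real.cos (2 * Real.pi / m))) = 0 := by
    rcases Nat.even_or_odd' m with ⟨k, hk | hk⟩
    · have e1 : ((m : ℤ) - 2) / 2 = k - 1 := by omega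
      have e2 : ((m : ℤ) - 1) / 2 = k - 1 := by omega
      have hS : (S ℝ (k - 1)).eval (2 * Real.cos (2 * Real.pi / m)) = 0 := by
        have := S_two_mul_real_cos (2 * Real.pi / m) (k - 1)
        have hang : (((k - 1 : ℤ) : ℝ) + 1) * (2 * Real.pi / m) = Real.pi := by
          have : (m : ℝ) = 2 * k := by exact_mod_cast hk
          push_cast
          field_simp
          linarith
        rw [hang, Real.sin_pi] at this
        exact (mul_eq_zero.mp this).resolve_right hsin
      rw [e1, e2, hS]
      simp
    · have e1 : ((m : ℤ) - 2) / 2 = k - 1 := by omega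
      have e2 : ((m : ℤ) - 1) / 2 = k := by omega
      have e3 : ((m : ℤ) - 3) / 2 = k - 1 := by omega
      have e4 : (m : ℤ) / 2 = k := by omega
      have hS : (S ℝ k).eval (2 * Real.cos (2 * Real.pi / m)) +
          (S ℝ (k - 1)).eval (2 * Real.cos (2 * Real.pi / m)) = 0 := by
        have ha := S_two_mul_real_cos (2 * Real.pi / m) (k - 1)
        have hb := S_two_mul_real_cos (2 * Real.pi / m) k
        have hmk : (m : ℝ) = 2 * k + 1 := by exact_mod_cast hk
        have hang : (((k - 1 : ℤ) : ℝ) + 1) * (2 * Real.pi / m) = Real.pi - Real.pi / m := by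
          push_cast
          field_simp
          linarith
        have hang' : (((k : ℤ) : ℝ) + 1) * (2 * Real.pi / m) = Real.pi / m + Real.pi := by
          push_cast
          field_simp
          linarith
        rw [hang, Real.sin_pi_sub] at ha
        rw [hang', Real.sin_add_pi] at hb
        apply (mul_eq_zero.mp (_ : _ * Real.sin (2 * Real.pi / m) = 0)).resolve_right hsin
        rw [add_mul, ha, hb]
        ring
      rw [e1, e2, e3, e4, hS]
      simp
  rw [key.1, key.2]
  simp

/-- The standard reflection representation of `W` on the real vector space with basis `B`. -/
noncomputable def reflRep (cs : CoxeterSystem M W) : W →* ((B →₀ ℝ) ≃ₗ[ℝ] (B →₀ ℝ)) :=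
  cs.lift ⟨fun i => reflection (coroot_self M i), reflection_isLiftable M⟩

lemma reflRep_simple (cs : CoxeterSystem M W) (i : B) (v : B →₀ ℝ) :
    reflRep cs (cs.simple i) v = v - coroot M i v • Finsupp.single i 1 := by
  rw [reflRep, cs.lift_apply_simple, reflection_apply]

/-- Elements of the parabolic subgroup omitting `i₀` act trivially on the coordinate at `i₀`. -/
lemma reflRep_apply_of_mem (cs : CoxeterSystem M W) (i₀ : B) {w : W}
    (hw : w ∈ Subgroup.closure {w : W | ∃ j, j ≠ i₀ ∧ cs.simple j = w}) (v : B →₀ ℝ) :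
    reflRep cs w v i₀ = v i₀ := by
  induction hw using Subgroup.closure_induction generalizing v with
  | mem x hx =>
    obtain ⟨j, hj, rfl⟩ := hx
    simp [reflRep_simple, hj]
  | one => simp
  | mul x y _ _ hx hy => rw [map_mul, LinearEquiv.mul_apply, hx, hy]
  | inv x _ hx =>
    rw [← hx (reflRep cs x⁻¹ v), ← LinearEquiv.mul_apply, ← map_mul]
    simp

/-- For `j ≠ i₀`, the element `s sⱼ s` lies in the parabolic subgroup omitting `i₀` only when `sⱼ`
commutes with `s`. -/
lemma commute_of_conj_mem (cs : CoxeterSystem M W) {i₀ j : B} (hj : j ≠ i₀)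
    (h : cs.simple i₀ * cs.simple j * cs.simple i₀ ∈
      Subgroup.closure {w : W | ∃ j, j ≠ i₀ ∧ cs.simple j = w}) :
    cs.simple j * cs.simple i₀ = cs.simple i₀ * cs.simple j := by
  -- `s sⱼ s` maps `s eⱼ` to `s sⱼ eⱼ = - s eⱼ`.
  have h1 := reflRep_apply_of_mem cs i₀ h (reflRep cs (cs.simple i₀) (Finsupp.single j 1))
  rw [← LinearEquiv.mul_apply, ← map_mul, mul_assoc, mul_assoc, cs.simple_mul_simple_self, mul_one,
    map_mul, LinearEquiv.mul_apply, reflRep_simple cs j, coroot_self, reflRep_simple,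
    reflRep_simple] at h1
  have h2 : Real.cos (Real.pi / M i₀ j) = 0 := by
    simp [hj, coroot] at h1
    linarith
  have h3 : M i₀ j = 2 := by
    have hne := M.off_diagonal i₀ j hj.symm
    by_contra hne2
    rcases Nat.eq_zero_or_pos (M i₀ j) with h0 | hpos
    · simp [h0] at h2
    · have h3 : (3 : ℝ) ≤ M i₀ j := by exact_mod_cast (by omega : 3 ≤ M i₀ j)
      have : 0 < Real.cos (Real.pi / M i₀ j) := by
        apply Real.cos_pos_of_mem_Ioo
        constructor
        · have : 0 < Real.pi / M i₀ j := by positivity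
          linarith [Real.pi_pos]
        · rw [div_lt_iff₀ (by positivity)]
          nlinarith [Real.pi_pos]
      exact this.ne' h2
  have h4 := cs.simple_mul_simple_pow i₀ j
  rw [h3, pow_two, mul_eq_one_iff_eq_inv, mul_inv_rev, cs.inv_simple, cs.inv_simple] at h4
  exact h4.symm

/-! ### Words in the parabolic subgroup -/

lemma wordProd_mem (cs : CoxeterSystem M W) {i₀ : B} {ω : List B} (h : ∀ j ∈ ω, j ≠ i₀) :
    cs.wordProd ω ∈ Subgroup.closure {w : W | ∃ j, j ≠ i₀ ∧ cs.simple j = w} := by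
  induction ω with
  | nil => simp
  | cons i ω ih =>
    rw [cs.wordProd_cons]
    exact mul_mem (Subgroup.subset_closure ⟨i, h i (by simp), rfl⟩)
      (ih fun j hj => h j (by simp [hj]))

lemma exists_word (cs : CoxeterSystem M W) {i₀ : B} {w : W}
    (h : w ∈ Subgroup.closure {w : W | ∃ j, j ≠ i₀ ∧ cs.simple j = w}) :
    ∃ ω : List B, (∀ j ∈ ω, j ≠ i₀) ∧ cs.wordProd ω = w := by
  induction h using Subgroup.closure_induction with
  | mem x hx =>
    obtain ⟨j, hj, rfl⟩ := hx
    exact ⟨[j], by simpa using hj, by simp⟩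
  | one => exact ⟨[], by simp, by simp⟩
  | mul x y _ _ hx hy =>
    obtain ⟨a, ha, rfl⟩ := hx
    obtain ⟨b, hb, rfl⟩ := hy
    refine ⟨a ++ b, ?_, cs.wordProd_append a b⟩
    intro j hj
    rcases List.mem_append.mp hj with hj | hj
    · exact ha j hj
    · exact hb j hj
  | inv x _ hx =>
    obtain ⟨a, ha, rfl⟩ := hx
    exact ⟨a.reverse, by simpa using ha, cs.wordProd_reverse a⟩

lemma rightInvSeq_mem (cs : CoxeterSystem M W) {i₀ : B} {ω : List B} (h : ∀ j ∈ ω, j ≠ i₀)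
    {t : W} (ht : t ∈ cs.rightInvSeq ω) :
    t ∈ Subgroup.closure {w : W | ∃ j, j ≠ i₀ ∧ cs.simple j = w} := by
  induction ω with
  | nil => simp at ht
  | cons i ω ih =>
    have hω : ∀ j ∈ ω, j ≠ i₀ := fun j hj => h j (by simp [hj])
    rw [CoxeterSystem.rightInvSeq, List.mem_cons] at ht
    rcases ht with rfl | ht
    · exact mul_mem (mul_mem (inv_mem (wordProd_mem cs hω))
        (Subgroup.subset_closure ⟨i, h i (by simp), rfl⟩)) (wordProd_mem cs hω)
    · exact ih hω ht

/-- If the last letter `j` of the word `ω j` contributes the only occurrence of `sⱼ` to its right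
inversion sequence and `ω j` has product commuting with `s`, then `s sⱼ s` lies in the parabolic
subgroup. -/
lemma conj_mem_of_commute (cs : CoxeterSystem M W) {i₀ j : B} {ω : List B}
    (h : ∀ k ∈ ω.concat j, k ≠ i₀)
    (hc : cs.wordProd (ω.concat j) * cs.simple i₀ = cs.simple i₀ * cs.wordProd (ω.concat j))
    (hj : cs.simple j ∉ cs.rightInvSeq ω) :
    cs.simple i₀ * cs.simple j * cs.simple i₀ ∈
      Subgroup.closure {w : W | ∃ j, j ≠ i₀ ∧ cs.simple j = w} := by
  classical
  have hprod : cs.wordProd ((ω.concat j).concat i₀) = cs.wordProd (i₀ :: ω.concat j) := by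
    rw [cs.wordProd_concat, cs.wordProd_cons, hc]
  have hpar := count_rightInvSeq_eq cs hprod (cs.simple i₀ * cs.simple j * cs.simple i₀)
  have hconj : (cs.wordProd (ω.concat j))⁻¹ * cs.simple i₀ * cs.wordProd (ω.concat j) =
      cs.simple i₀ := by
    rw [mul_assoc, ← hc, inv_mul_cancel_left]
  rw [cs.rightInvSeq_concat (ω.concat j), CoxeterSystem.rightInvSeq, hconj, List.concat_eq_append,
    List.count_append, List.count_cons (l := cs.rightInvSeq _), List.count_singleton] at hpar
  -- Conjugation by a simple reflection preserves multiplicities.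
  have hmap : ∀ (k : B) (l : List W) (t : W), (l.map (MulAut.conj (cs.simple k))).count
      (cs.simple k * t * cs.simple k) = l.count t := by
    intro k l t
    have := List.count_map_of_injective l (MulAut.conj (cs.simple k))
      (MulAut.conj (cs.simple k)).injective t
    simpa using this
  have hone : (cs.rightInvSeq (ω.concat j)).count (cs.simple j) = 1 := by
    have h0 := hmap j (cs.rightInvSeq ω) (cs.simple j)
    rw [List.count_eq_zero_of_not_mem hj] at h0
    rw [cs.rightInvSeq_concat, List.concat_eq_append, List.count_append]
    simp at h0
    simp [h0]
  rw [hmap, hone] at hpar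
  apply rightInvSeq_mem cs h
  by_contra hmem
  rw [List.count_eq_zero_of_not_mem hmem] at hpar
  simp at hpar

/-- A repetition of `sⱼ` in the right inversion sequence of `ω j` allows two letters to be
deleted. -/
lemma exists_eraseIdx (cs : CoxeterSystem M W) {j : B} {ω : List B}
    (hj : cs.simple j ∈ cs.rightInvSeq ω) :
    ∃ k < ω.length, cs.wordProd (ω.concat j) = cs.wordProd (ω.eraseIdx k) := by
  obtain ⟨k, hk, hkj⟩ := List.getElem_of_mem hj
  refine ⟨k, by simpa using hk, ?_⟩
  rw [cs.wordProd_concat, ← cs.wordProd_mul_getD_rightInvSeq, List.getD_eq_getElem _ _ hk, hkj]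

lemma mem_of_word (cs : CoxeterSystem M W) (i₀ : B) (n : ℕ) : ∀ ω : List B, ω.length = n →
    (∀ j ∈ ω, j ≠ i₀) → cs.wordProd ω * cs.simple i₀ = cs.simple i₀ * cs.wordProd ω →
    cs.wordProd ω ∈ Subgroup.closure {w : W | ∃ j, j ≠ i₀ ∧
      cs.simple j * cs.simple i₀ = cs.simple i₀ * cs.simple j ∧ cs.simple j = w} := by
  induction n using Nat.strong_induction_on with
  | _ n ih =>
    intro ω hn h hc
    rcases List.eq_nil_or_concat ω with rfl | ⟨ω, j, rfl⟩
    · simp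
    have hω : ∀ k ∈ ω, k ≠ i₀ := fun k hk => h k (by simp [hk])
    have hji : j ≠ i₀ := h j (by simp)
    have hlen : ω.length < n := by
      rw [← hn]
      simp
    by_cases hj : cs.simple j ∈ cs.rightInvSeq ω
    · obtain ⟨k, hk, he⟩ := exists_eraseIdx cs hj
      rw [he] at hc ⊢
      exact ih _ (lt_of_le_of_lt (List.length_eraseIdx_le ω k) hlen) _ rfl
        (fun l hl => hω l (List.mem_of_mem_eraseIdx hl)) hc
    · have hcomm := commute_of_conj_mem cs hji (conj_mem_of_commute cs h hc hj)
      rw [cs.wordProd_concat] at hc ⊢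
      refine mul_mem (ih _ hlen ω rfl hω ?_) (Subgroup.subset_closure ⟨j, hji, hcomm, rfl⟩)
      rw [mul_assoc, hcomm, ← mul_assoc, ← mul_assoc] at hc
      exact mul_right_cancel hc

end CoxeterCentralizer

/-- For a Coxeter system `(W, cs)` and an index `i₀`, the intersection of the
standard parabolic subgroup `P = ⟨sⱼ : j ≠ i₀⟩` with the centralizer of the simple reflection
`s i₀` is the standard parabolic subgroup generated by the simple reflections `sⱼ` (`j ≠ i₀`)
that commute with `s i₀`. -/
theorem stmt_0 {B W : Type*} [Group W] {M : CoxeterMatrix B}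
    (cs : CoxeterSystem M W) (i₀ : B) :
    Subgroup.closure {w : W | ∃ j, j ≠ i₀ ∧ cs.simple j = w} ⊓
      Subgroup.centralizer {cs.simple i₀} =
    Subgroup.closure {w : W | ∃ j, j ≠ i₀ ∧
      cs.simple j * cs.simple i₀ = cs.simple i₀ * cs.simple j ∧ cs.simple j = w} := by
  apply le_antisymm
  · rintro w ⟨hw, hc⟩
    obtain ⟨ω, hω, rfl⟩ := CoxeterCentralizer.exists_word cs hw
    have hc' := Subgroup.mem_centralizer_iff.mp hc (cs.simple i₀) rfl
    exact CoxeterCentralizer.mem_of_word cs i₀ _ ω rfl hω hc'.symm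
  · rw [Subgroup.closure_le]
    rintro w ⟨j, hj, hc, rfl⟩
    refine ⟨Subgroup.subset_closure ⟨j, hj, rfl⟩, Subgroup.mem_centralizer_iff.mpr ?_⟩
    rintro x rfl
    exact hc.symm
end

section
/- Let (W, cs) be a Coxeter system over a Coxeter matrix M indexed by a type B, fix i₀ ∈ B, let t := cs.simple i₀ and let P := Subgroup.closure {cs.simple j | j ∈ B, j ≠ i₀} be the standard parabolic subgroup omitting i₀. Then: (i) for every w ∈ P, if t * w * t ∈ P then t * w * t = w; (ii) consequently, for every r ∈ P, every element w ∈ P that commutes with t * r commutes with both t and r (so the centralizer of t*r in P is contained in the centralizer of t in P). -/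
/-!
The proof lets `W` act on `W × ZMod 2` so that the simple reflection `s` sends `(y, ε)` to
`(s * y * s, ε + [y = s])`. This is the action underlying the strong exchange condition, extended
from reflections to all elements of `W` (`inversionPerm_isLiftable` checks the Coxeter relations).
The generators of `P` never flip the sign of a pair `(y, ε)` with `y ∉ P`, because all
`P`-conjugates of such a `y` stay outside `P` (`inversionAction_of_mem`).

The simple reflection `t` is not in `P`: in the geometric representation on `B →₀ ℝ`, elements of
`P` preserve the `i₀`-th coordinate while `t` negates that of the `i₀`-th basis vector
(`simple_notMem_standardParabolicOmitting`).

Now let `w` and `w' = t * w * t` both lie in `P`, so that `w' * t = t * w`. Acting on `(t, 0)` by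
the left side flips the sign exactly once, at `t`. Acting by the right side, `w` flips nothing and
`t` flips the sign exactly when `w * t * w⁻¹ = t`. Hence `w` and `t` commute, which is (i).
For (ii), if `w` commutes with `t * r`, then `t * w * t = r * w * r⁻¹ ∈ P` and (i) applies.
-/

/-- The standard parabolic subgroup of a Coxeter system omitting the index `i₀`. -/
def standardParabolicOmitting {B W : Type*} [Group W] {M : CoxeterMatrix B}
    (cs : CoxeterSystem M W) (i₀ : B) : Subgroup W :=
  Subgroup.closure {w : W | ∃ j, j ≠ i₀ ∧ cs.simple j = w}

/-! ### The geometric representation -/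

open Polynomial.Chebyshev in
/-- If the pairings of two reflections multiply to `4 cos² (π / m)` with `3 ≤ m`, then the product
of the reflections has order dividing `m`: it is a rotation by `2π / m` on the span of `x` and
`y`. -/
lemma reflection_mul_reflection_pow_eq_one {V : Type*} [AddCommGroup V] [Module ℝ V]
    {x y : V} {f g : Module.Dual ℝ V} (hf : f x = 2) (hg : g y = 2) {m : ℕ} (hm : 3 ≤ m)
    (h : f y * g x = 4 * Real.cos (Real.pi / m) ^ 2) :
    (Module.reflection hf * Module.reflection hg) ^ m = 1 := by
  have hm0 : (0 : ℝ) < m := by positivity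
  have hm3 : (3 : ℝ) ≤ m := by exact_mod_cast hm
  set θ : ℝ := 2 * (Real.pi / m) with hθ
  have hmθ : m * θ = 2 * Real.pi := by rw [hθ]; field_simp
  have ht : 2 * Real.cos θ = f y * g x - 2 := by rw [h, hθ, Real.cos_two_mul]; ring
  have hsin : Real.sin θ ≠ 0 := by
    apply ne_of_gt
    apply Real.sin_pos_of_pos_of_lt_pi
    · have := Real.pi_pos
      positivity
    · nlinarith [Real.pi_pos]
  have hS (n : ℤ) := S_two_mul_real_cos θ n
  ext z
  rw [Module.reflection_mul_reflection_pow_apply hf hg m z (2 * Real.cos θ) ht]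
  rcases Nat.even_or_odd' m with ⟨k, hk | hk⟩
  · have e1 : ((m : ℤ) - 2) / 2 = k - 1 := by omega
    have e2 : ((m : ℤ) - 1) / 2 = k - 1 := by omega
    have hz : (S ℝ ((k : ℤ) - 1)).eval (2 * Real.cos θ) = 0 := by
      have h1 := hS (k - 1)
      have h2 : (((k : ℤ) - 1 : ℤ) + 1 : ℝ) * θ = Real.pi := by
        rw [hk] at hmθ; push_cast at hmθ ⊢; linarith
      rw [h2, Real.sin_pi] at h1
      exact (mul_eq_zero.mp h1).resolve_right hsin
    rw [e1, e2, hz]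
    simp
  · have e1 : ((m : ℤ) - 2) / 2 = k - 1 := by omega
    have e2 : ((m : ℤ) - 1) / 2 = k := by omega
    have e3 : ((m : ℤ) - 3) / 2 = k - 1 := by omega
    have e4 : (m : ℤ) / 2 = k := by omega
    have hz : (S ℝ (k : ℤ)).eval (2 * Real.cos θ)
        + (S ℝ ((k : ℤ) - 1)).eval (2 * Real.cos θ) = 0 := by
      have h1 := hS k
      have h2 := hS (k - 1)
      -- The two angles add up to `2π`.
      have h3 : (((k : ℤ) : ℝ) + 1) * θ = 2 * Real.pi - (((k : ℤ) - 1 : ℤ) + 1 : ℝ) * θ := by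
        rw [hk] at hmθ; push_cast at hmθ ⊢; linarith
      rw [h3, Real.sin_two_pi_sub] at h1
      have : ((S ℝ (k : ℤ)).eval (2 * Real.cos θ)
        + (S ℝ ((k : ℤ) - 1)).eval (2 * Real.cos θ)) * Real.sin θ = 0 := by
        rw [add_mul]; linarith
      exact (mul_eq_zero.mp this).resolve_right hsin
    rw [e1, e2, e3, e4, hz]
    simp

/-- The `i`-th simple coroot of the geometric representation on `B →₀ ℝ`: it pairs with the `j`-th
basis vector to `-2 cos (π / M i j)`. An infinite bond `M i j = 0` gives `-2`, as it should, since
`π / 0 = 0` in Lean. -/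
noncomputable def geomCoroot {B : Type*} (M : CoxeterMatrix B) (i : B) :
    Module.Dual ℝ (B →₀ ℝ) :=
  Finsupp.linearCombination ℝ (fun j => -2 * Real.cos (Real.pi / M i j))

lemma geomCoroot_single {B : Type*} (M : CoxeterMatrix B) (i j : B) :
    geomCoroot M i (Finsupp.single j 1) = -2 * Real.cos (Real.pi / M i j) := by
  simp [geomCoroot]

lemma geomCoroot_self {B : Type*} (M : CoxeterMatrix B) (i : B) :
    geomCoroot M i (Finsupp.single i 1) = 2 := by
  simp [geomCoroot_single]

/-- The reflection by which the `i`-th simple reflection acts in the geometric representation. -/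
noncomputable def geomReflection {B : Type*} (M : CoxeterMatrix B) (i : B) :
    (B →₀ ℝ) ≃ₗ[ℝ] (B →₀ ℝ) :=
  Module.reflection (geomCoroot_self M i)

lemma geomReflection_apply {B : Type*} (M : CoxeterMatrix B) (i : B) (v : B →₀ ℝ) :
    geomReflection M i v = v - geomCoroot M i v • Finsupp.single i 1 :=
  Module.reflection_apply _ _

lemma geomReflection_isLiftable {B : Type*} (M : CoxeterMatrix B) :
    M.IsLiftable (geomReflection M) := by
  intro i j
  by_cases hij : i = j
  · subst hij
    rw [M.diagonal, pow_one]
    ext1 v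
    exact Module.involutive_reflection (geomCoroot_self M i) v
  have h1 : M i j ≠ 1 := M.off_diagonal i j hij
  rcases Nat.lt_or_ge (M i j) 3 with h3 | h3
  · have h02 : M i j = 0 ∨ M i j = 2 := by omega
    rcases h02 with h | h
    · rw [h, pow_zero]
    · -- The two reflections are orthogonal.
      have hfy : geomCoroot M i (Finsupp.single j 1) = 0 := by simp [geomCoroot_single, h]
      have hgx : geomCoroot M j (Finsupp.single i 1) = 0 := by
        simp [geomCoroot_single, M.symmetric j i, h]
      rw [h, pow_two]
      ext1 v
      simp only [LinearEquiv.mul_apply, geomReflection_apply, map_sub, map_smul, hfy, hgx,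
        geomCoroot_self, LinearEquiv.coe_one, id_eq]
      module
  · refine reflection_mul_reflection_pow_eq_one _ _ h3 ?_
    rw [geomCoroot_single, geomCoroot_single, M.symmetric j i]
    ring

/-- Elements of `P` preserve the `i₀`-th coordinate in the geometric representation, and
`s i₀` does not. -/
lemma simple_notMem_standardParabolicOmitting {B W : Type*} [Group W] {M : CoxeterMatrix B}
    (cs : CoxeterSystem M W) (i₀ : B) :
    cs.simple i₀ ∉ standardParabolicOmitting cs i₀ := by
  let ρ := cs.lift ⟨geomReflection M, geomReflection_isLiftable M⟩
  have hρ (i : B) : ρ (cs.simple i) = geomReflection M i :=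
    cs.lift_apply_simple (geomReflection_isLiftable M) i
  have key : ∀ w ∈ standardParabolicOmitting cs i₀, ∀ v, (ρ w v) i₀ = v i₀ := by
    intro w hw
    induction hw using Subgroup.closure_induction with
    | mem x hx =>
      obtain ⟨j, hj, rfl⟩ := hx
      intro v
      simp [hρ, geomReflection_apply, hj]
    | one => simp
    | mul x y _ _ hx hy => intro v; rw [map_mul, LinearEquiv.mul_apply, hx, hy]
    | inv x _ hx =>
      intro v
      rw [← hx (ρ x⁻¹ v), ← LinearEquiv.mul_apply, ← map_mul]
      simp
  intro ht
  have h := key _ ht (Finsupp.single i₀ 1)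
  rw [hρ, geomReflection_apply, geomCoroot_self] at h
  norm_num at h

/-! ### The inversion-counting action -/

open Classical in
/-- The map `(y, ε) ↦ (s * y * s, ε + [y = s])` on `W × ZMod 2`, for the simple reflection
`s = s i`. The first component ranges over all of `W` rather than only the reflections. -/
noncomputable def inversionFun {B W : Type*} [Group W] {M : CoxeterMatrix B}
    (cs : CoxeterSystem M W) (i : B) (p : W × ZMod 2) : W × ZMod 2 :=
  (cs.simple i * p.1 * cs.simple i, p.2 + if p.1 = cs.simple i then 1 else 0)

lemma inversionFun_involutive {B W : Type*} [Group W] {M : CoxeterMatrix B}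
    (cs : CoxeterSystem M W) (i : B) : Function.Involutive (inversionFun cs i) := by
  classical
  rintro ⟨y, ε⟩
  have h : cs.simple i * y * cs.simple i = cs.simple i ↔ y = cs.simple i := by
    constructor
    · intro h
      have := congrArg (fun z => cs.simple i * z * cs.simple i) h
      simpa [mul_assoc] using this
    · rintro rfl; simp
  have hfun (y : W) (ε : ZMod 2) : inversionFun cs i (y, ε) =
      (cs.simple i * y * cs.simple i, ε + if y = cs.simple i then 1 else 0) := by
    simp only [inversionFun]
  rw [hfun, hfun]
  simp only [h, Prod.mk.injEq]
  exact ⟨by simp [mul_assoc], by rw [add_assoc, CharTwo.add_self_eq_zero, add_zero]⟩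

/-- `inversionFun` as a permutation. -/
noncomputable def inversionPerm {B W : Type*} [Group W] {M : CoxeterMatrix B}
    (cs : CoxeterSystem M W) (i : B) : Equiv.Perm (W × ZMod 2) :=
  (inversionFun_involutive cs i).toPerm

open Classical in
lemma inversionPerm_apply {B W : Type*} [Group W] {M : CoxeterMatrix B}
    (cs : CoxeterSystem M W) (i : B) (y : W) (ε : ZMod 2) :
    inversionPerm cs i (y, ε) =
      (cs.simple i * y * cs.simple i, ε + if y = cs.simple i then 1 else 0) := rfl

open Classical in
/-- With `c = s i * s j`, the inversions met by the word `(i j)ⁿ` are the elements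
`s j * c ^ k` for `k < 2 n`. -/
lemma inversionPerm_mul_pow_apply {B W : Type*} [Group W] {M : CoxeterMatrix B}
    (cs : CoxeterSystem M W) (i j : B) (n : ℕ) (y : W) (ε : ZMod 2) :
    ((inversionPerm cs i * inversionPerm cs j) ^ n) (y, ε) =
      ((cs.simple i * cs.simple j) ^ n * y * ((cs.simple i * cs.simple j) ^ n)⁻¹,
        ε + ∑ k ∈ Finset.range (2 * n),
          if y = cs.simple j * (cs.simple i * cs.simple j) ^ k then 1 else 0) := by
  induction n with
  | zero => simp
  | succ n ih =>
    set a := cs.simple i with ha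
    set b := cs.simple j with hb
    set c := a * b with hc
    have haa : a * a = 1 := cs.simple_mul_simple_self i
    have hbb : b * b = 1 := cs.simple_mul_simple_self j
    have hai : a⁻¹ = a := cs.inv_simple i
    have hbi : b⁻¹ = b := cs.inv_simple j
    have hci : c⁻¹ = b * a := by rw [hc, mul_inv_rev, hai, hbi]
    -- Both `a` and `b` conjugate `c` to its inverse.
    have hbc : ∀ k : ℕ, b * c ^ k = (c ^ k)⁻¹ * b := by
      intro k
      have h : b * c ^ k * b⁻¹ = (c ^ k)⁻¹ := by
        rw [← conj_pow, ← inv_pow, hci, hc, hbi]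
        congr 1
        rw [mul_assoc, mul_assoc, hbb, mul_one]
      rw [← h, inv_mul_cancel_right]
    have e1 : c ^ n * y * (c ^ n)⁻¹ = b ↔ y = b * c ^ (2 * n) := by
      rw [mul_inv_eq_iff_eq_mul, ← eq_inv_mul_iff_mul_eq, two_mul, pow_add, ← mul_assoc,
        ← mul_assoc, hbc n]
    have e2 : b * (c ^ n * y * (c ^ n)⁻¹) * b = a ↔ y = b * c ^ (2 * n + 1) := by
      have h1 : b * c ^ (2 * n + 1) = (c ^ n)⁻¹ * (b * a * b) * c ^ n := by
        rw [show 2 * n + 1 = n + (1 + n) by ring, pow_add, pow_add, ← mul_assoc, hbc n, pow_one, hc]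
        simp only [mul_assoc]
      rw [h1]
      constructor
      · intro h
        rw [← h]
        simp only [mul_assoc, hbb, mul_one, inv_mul_cancel]
        rw [← mul_assoc b b, hbb, one_mul]
        simp
      · rintro rfl
        have : b * (c ^ n * ((c ^ n)⁻¹ * (b * a * b) * c ^ n) * (c ^ n)⁻¹) * b
            = (b * b) * a * (b * b) := by group
        rw [this, hbb, one_mul, mul_one]
    rw [pow_succ', Equiv.Perm.mul_apply, ih, Equiv.Perm.mul_apply, inversionPerm_apply,
      inversionPerm_apply, show 2 * (n + 1) = 2 * n + 1 + 1 by ring, Finset.sum_range_succ,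
      Finset.sum_range_succ, Prod.mk.injEq]
    constructor
    · rw [← ha, ← hb, pow_succ' c, mul_inv_rev, hci]
      simp only [hc, mul_assoc]
    · rw [← ha, ← hb]
      simp only [e1, e2]
      ring

lemma inversionPerm_isLiftable {B W : Type*} [Group W] {M : CoxeterMatrix B}
    (cs : CoxeterSystem M W) : M.IsLiftable (inversionPerm cs) := by
  classical
  intro i j
  ext1 ⟨y, ε⟩
  -- The inversions are periodic with period `M i j`, so each is met an even number of times.
  rw [inversionPerm_mul_pow_apply, two_mul, Finset.sum_range_add]
  simp only [pow_add, cs.simple_mul_simple_pow, one_mul, CharTwo.add_self_eq_zero]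
  simp

/-- The action of `W` on `W × ZMod 2` extending `inversionPerm`. -/
noncomputable def inversionAction {B W : Type*} [Group W] {M : CoxeterMatrix B}
    (cs : CoxeterSystem M W) : W →* Equiv.Perm (W × ZMod 2) :=
  cs.lift ⟨inversionPerm cs, inversionPerm_isLiftable cs⟩

open Classical in
lemma inversionAction_simple {B W : Type*} [Group W] {M : CoxeterMatrix B}
    (cs : CoxeterSystem M W) (i : B) (y : W) (ε : ZMod 2) :
    inversionAction cs (cs.simple i) (y, ε) =
      (cs.simple i * y * cs.simple i, ε + if y = cs.simple i then 1 else 0) := by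
  rw [inversionAction, cs.lift_apply_simple (inversionPerm_isLiftable cs), inversionPerm_apply]

/-- An element of `P` has no inversions outside `P`. -/
lemma inversionAction_of_mem {B W : Type*} [Group W] {M : CoxeterMatrix B}
    (cs : CoxeterSystem M W) (i₀ : B) {w : W} (hw : w ∈ standardParabolicOmitting cs i₀) :
    ∀ (y : W) (ε : ZMod 2), y ∉ standardParabolicOmitting cs i₀ →
      inversionAction cs w (y, ε) = (w * y * w⁻¹, ε) := by
  classical
  have hconj {x y : W} (hx : x ∈ standardParabolicOmitting cs i₀)
      (hy : y ∉ standardParabolicOmitting cs i₀) :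
      x * y * x⁻¹ ∉ standardParabolicOmitting cs i₀ := by
    rwa [Subgroup.mul_mem_cancel_right _ (inv_mem hx), Subgroup.mul_mem_cancel_left _ hx]
  induction hw using Subgroup.closure_induction with
  | mem x hx =>
    intro y ε hy
    have hxP : x ∈ standardParabolicOmitting cs i₀ := Subgroup.subset_closure hx
    obtain ⟨j, -, rfl⟩ := hx
    have hne : y ≠ cs.simple j := fun h => hy (h ▸ hxP)
    rw [inversionAction_simple, if_neg hne, add_zero, cs.inv_simple]
  | one => simp
  | mul x z _ hzP hx hz =>
    intro y ε hy
    rw [map_mul, Equiv.Perm.mul_apply, hz y ε hy, hx _ ε (hconj hzP hy)]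
    simp only [mul_inv_rev, mul_assoc]
  | inv x hxP hx =>
    intro y ε hy
    rw [map_inv, Equiv.Perm.inv_eq_iff_eq, hx _ ε (hconj (inv_mem hxP) hy)]
    simp [mul_assoc]

/-- Part (i): comparing the two sides of `(t * w * t) * t = t * w` on `(t, 0)`. -/
lemma simple_conj_eq_self {B W : Type*} [Group W] {M : CoxeterMatrix B}
    (cs : CoxeterSystem M W) (i₀ : B) {w : W} (hw : w ∈ standardParabolicOmitting cs i₀)
    (hw' : cs.simple i₀ * w * cs.simple i₀ ∈ standardParabolicOmitting cs i₀) :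
    cs.simple i₀ * w * cs.simple i₀ = w := by
  classical
  have ht := simple_notMem_standardParabolicOmitting cs i₀
  have h : inversionAction cs (cs.simple i₀ * w * cs.simple i₀ * cs.simple i₀) (cs.simple i₀, 0)
      = inversionAction cs (cs.simple i₀ * w) (cs.simple i₀, 0) := by
    rw [cs.simple_mul_simple_cancel_right]
  rw [map_mul, Equiv.Perm.mul_apply, inversionAction_simple, if_pos rfl,
    cs.simple_mul_simple_self, one_mul, inversionAction_of_mem cs i₀ hw' _ _ ht,
    map_mul, Equiv.Perm.mul_apply, inversionAction_of_mem cs i₀ hw _ _ ht,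
    inversionAction_simple] at h
  have h2 := congrArg Prod.snd h
  have hcomm : w * cs.simple i₀ * w⁻¹ = cs.simple i₀ := by
    by_contra hne
    simp [hne] at h2
  rw [mul_inv_eq_iff_eq_mul] at hcomm
  rw [← hcomm, cs.simple_mul_simple_cancel_right]

/-- Let `t = s i₀` and `P = ⟨sⱼ : j ≠ i₀⟩`.
(i) For every `w ∈ P`, if `t * w * t ∈ P` then `t * w * t = w`.
(ii) Consequently, for every `r ∈ P`, every `w ∈ P` commuting with `t * r` commutes with
both `t` and `r`. -/
theorem stmt_1 {B W : Type*} [Group W] {M : CoxeterMatrix B}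
    (cs : CoxeterSystem M W) (i₀ : B) :
    (∀ w ∈ standardParabolicOmitting cs i₀,
      cs.simple i₀ * w * cs.simple i₀ ∈ standardParabolicOmitting cs i₀ →
      cs.simple i₀ * w * cs.simple i₀ = w) ∧
    (∀ r ∈ standardParabolicOmitting cs i₀, ∀ w ∈ standardParabolicOmitting cs i₀,
      w * (cs.simple i₀ * r) = (cs.simple i₀ * r) * w →
      w * cs.simple i₀ = cs.simple i₀ * w ∧ w * r = r * w) := by
  refine ⟨fun w hw hw' => simple_conj_eq_self cs i₀ hw hw', fun r hr w hw h => ?_⟩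
  have hrw : cs.simple i₀ * w * cs.simple i₀ = r * w * r⁻¹ := by
    rw [eq_mul_inv_iff_mul_eq, mul_assoc, mul_assoc, h, mul_assoc,
      cs.simple_mul_simple_cancel_left]
  have hfix := simple_conj_eq_self cs i₀ hw (hrw ▸ mul_mem (mul_mem hr hw) (inv_mem hr))
  constructor
  · calc w * cs.simple i₀ = cs.simple i₀ * w * cs.simple i₀ * cs.simple i₀ := by rw [hfix]
      _ = cs.simple i₀ * w := cs.simple_mul_simple_cancel_right i₀
  · exact eq_mul_inv_iff_mul_eq.mp (hfix.symm.trans hrw)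
end

section
/- Let B be a type, M̂ a Coxeter matrix on Option B, and M its restriction to B (M i j := M̂ (some i) (some j), which is again a Coxeter matrix). Let (Ŵ, ĉs) be a Coxeter system for M̂ and (W, cs) a Coxeter system for M. Suppose r ∈ W satisfies r * r = 1 and, for every i ∈ B, (r * cs.simple i)^(M̂ none (some i)) = 1. Then: (1) there is a unique group homomorphism π : Ŵ → W with π(ĉs.simple none) = r and π(ĉs.simple (some i)) = cs.simple i for all i ∈ B; (2) there is a unique group homomorphism j : W → Ŵ with j(cs.simple i) = ĉs.simple (some i) for all i ∈ B, and π ∘ j = id on W (hence π is surjective, j is injective, and Ŵ is the internal semidirect product of ker π by the image of j); (3) the kernel of π equals the normal closure in Ŵ of the single element (ĉs.simple none) * j(r). -/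
/-!
Both homomorphisms exist and are unique by the universal property of a Coxeter system: `π` because
the images of the generators satisfy the relations of `Mh`, and `j` because the relations of `M` are
among those of `Mh`. The identity `π ∘ j = id` holds on generators, and the semidirect decomposition
is the one attached to a split surjection.

For the kernel, let `N` be the normal closure of `ŝ_none * j r`. The inclusion `N ≤ ker π` follows
from `r * r = 1`. Conversely, the two homomorphisms `w ↦ w N` and `w ↦ j (π w) N` from `Wh` to
`Wh ⧸ N` agree on the generators: for `ŝ_some i` already before passing to the quotient, and for
`ŝ_none` because `ŝ_none * j r ∈ N`. Hence they are equal, and `π w = 1` forces `w ∈ N`.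
-/


/-- Let `Mh` be a Coxeter matrix on `Option B` and `M` its restriction to `B`.
Let `(Wh, csh)` and `(W, cs)` be Coxeter systems for `Mh` and `M` respectively, and let `r ∈ W`
be an involution with `(r * sᵢ)^(Mh none (some i)) = 1` for all `i`. Then:
(1) there is a unique homomorphism `π : Wh → W` with `π(ŝ_none) = r`, `π(ŝ_some i) = sᵢ`;
(2) there is a unique homomorphism `j : W → Wh` with `j(sᵢ) = ŝ_some i`, and for any such `π, j`
we have `π ∘ j = id` (hence `π` surjective, `j` injective, and `Wh` is the internal semidirect
product of `ker π` by `im j`);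
(3) `ker π` is the normal closure of the single element `ŝ_none * j r`. -/
theorem stmt_3 {B Wh W : Type*} [Group Wh] [Group W]
    {Mh : CoxeterMatrix (Option B)} {M : CoxeterMatrix B}
    (hM : ∀ i j : B, M i j = Mh (some i) (some j))
    (csh : CoxeterSystem Mh Wh) (cs : CoxeterSystem M W)
    (r : W) (hr : r * r = 1)
    (hord : ∀ i : B, (r * cs.simple i) ^ Mh none (some i) = 1) :
    (∃! π : Wh →* W,
      π (csh.simple none) = r ∧ ∀ i : B, π (csh.simple (some i)) = cs.simple i) ∧
    (∃! j : W →* Wh, ∀ i : B, j (cs.simple i) = csh.simple (some i)) ∧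
    (∀ (π : Wh →* W) (j : W →* Wh),
      (π (csh.simple none) = r ∧ ∀ i : B, π (csh.simple (some i)) = cs.simple i) →
      (∀ i : B, j (cs.simple i) = csh.simple (some i)) →
      π.comp j = MonoidHom.id W ∧
      Function.Surjective π ∧ Function.Injective j ∧
      π.ker ⊔ j.range = ⊤ ∧ π.ker ⊓ j.range = ⊥ ∧
      π.ker = Subgroup.normalClosure {csh.simple none * j r}) := by
  have hliftπ : Mh.IsLiftable (fun o : Option B => o.elim r cs.simple) := by
    rintro (_ | i) (_ | k)
    · simp [hr]
    · exact hord k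
    · have h : cs.simple i * r = (r * cs.simple i)⁻¹ := by
        rw [mul_inv_rev, cs.inv_simple, inv_eq_of_mul_eq_one_right hr]
      simp only [Option.elim]
      rw [h, inv_pow, Mh.symmetric, hord i, inv_one]
    · simp only [Option.elim]
      rw [← hM]
      exact cs.simple_mul_simple_pow i k
  have hliftj : M.IsLiftable (fun i : B => csh.simple (some i)) := by
    intro i k
    rw [hM]
    exact csh.simple_mul_simple_pow (some i) (some k)
  refine ⟨⟨csh.lift ⟨_, hliftπ⟩, ⟨csh.lift_apply_simple hliftπ none,
    fun i => csh.lift_apply_simple hliftπ (some i)⟩, ?_⟩,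
    ⟨cs.lift ⟨_, hliftj⟩, fun i => cs.lift_apply_simple hliftj i, ?_⟩, ?_⟩
  · rintro φ ⟨h0, h1⟩
    apply csh.ext_simple
    rintro (_ | i)
    · rw [h0, csh.lift_apply_simple hliftπ]; rfl
    · rw [h1, csh.lift_apply_simple hliftπ]; rfl
  · intro φ h
    apply cs.ext_simple
    intro i
    rw [h, cs.lift_apply_simple hliftj]
  · rintro π j ⟨hπ0, hπ1⟩ hj
    have hcomp : π.comp j = MonoidHom.id W :=
      cs.ext_simple fun i => by simp [hj, hπ1]
    have hπj : ∀ w, π (j w) = w := fun w => DFunLike.congr_fun hcomp w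
    refine ⟨hcomp, fun w => ⟨j w, hπj w⟩, Function.LeftInverse.injective hπj, ?_, ?_, ?_⟩
    · rw [eq_top_iff]
      intro x _
      have hx : x * (j (π x))⁻¹ ∈ π.ker := by simp [MonoidHom.mem_ker, hπj]
      simpa using Subgroup.mul_mem_sup hx (MonoidHom.mem_range.2 ⟨π x, rfl⟩ : j (π x) ∈ j.range)
    · rw [eq_bot_iff]
      rintro x ⟨hx, w, rfl⟩
      have hw : π (j w) = 1 := hx
      rw [hπj] at hw
      simp [hw]
    · apply le_antisymm
      · intro x hx
        set N := Subgroup.normalClosure {csh.simple none * j r} with hN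
        have key : QuotientGroup.mk' N = ((QuotientGroup.mk' N).comp j).comp π := by
          apply csh.ext_simple
          rintro (_ | i)
          · simp only [MonoidHom.comp_apply, hπ0, QuotientGroup.mk'_apply]
            rw [QuotientGroup.eq, csh.inv_simple]
            exact Subgroup.subset_normalClosure rfl
          · simp [hπ1, hj]
        have h := DFunLike.congr_fun key x
        rw [MonoidHom.comp_apply, MonoidHom.mem_ker.1 hx, map_one] at h
        exact (QuotientGroup.eq_one_iff x).1 h
      · apply Subgroup.normalClosure_le_normal
        rw [Set.singleton_subset_iff]
        simp [MonoidHom.mem_ker, hπ0, hπj, hr]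
end

section
/- Let m = 2k+1 with k ≥ 1. In the dihedral Coxeter group W of type I₂(m) with r := (s₁s₂)^k * s₁, the following hold: r * r = 1 and r ≠ 1; r * s₁ * r = s₂ (hence also r * s₂ * r = s₁); orderOf (r * s₁) = m and orderOf (r * s₂) = m; and Subgroup.closure {r, s₁} = ⊤ and Subgroup.closure {r, s₂} = ⊤. (This verifies that the extension Î₂(m) for odd m is the triangle Coxeter group with all three bonds equal to m.) -/
/-!
Everything follows from the fact that the rotation `t = s₁s₂` has order exactly `m = 2k+1`. It is
killed by `m` through the Coxeter relation, and its order is no smaller because the Coxeter group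
maps onto Mathlib's `DihedralGroup m` with `t` going to the rotation `r 1` (`orderOf_simple_mul`).

Conjugation by `s₁` inverts `t`, so `r = t ^ k * s₁` is an involution, and
`r * s₁ * r = t ^ (2k) * s₁ = t⁻¹ * s₁ = s₂`. Moreover `r * s₁ = t ^ k` and `r * s₂ = t ^ (k+1)`, and
both exponents are coprime to `2k+1`. Since conjugation by `r` exchanges `s₁` and `s₂`, a subgroup
containing `r` and one simple reflection contains the other.
-/

/-- The Coxeter matrix of the dihedral group I₂(m) (for `2 ≤ m`), with simple reflections
indexed by `Fin 2`. -/
def I2Matrix (m : ℕ) (hm : 2 ≤ m) : CoxeterMatrix (Fin 2) where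
  M := !![1, m; m, 1]
  isSymm := by
    ext i j
    fin_cases i <;> fin_cases j <;> rfl
  diagonal i := by fin_cases i <;> rfl
  off_diagonal i j hij := by
    fin_cases i <;> fin_cases j <;> simp_all <;> omega

/-- The rotation `s₁s₂` has order exactly `m`: the lower bound comes from the homomorphism to
`DihedralGroup m` sending the simple reflections to `sr 0` and `sr 1`. -/
theorem orderOf_simple_mul {W : Type*} [Group W] {m : ℕ} (hm : 2 ≤ m)
    (cs : CoxeterSystem (I2Matrix m hm) W) :
    orderOf (cs.simple 0 * cs.simple 1) = m := by
  have hlift : (I2Matrix m hm).IsLiftable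
      (![DihedralGroup.sr 0, DihedralGroup.sr 1] : Fin 2 → DihedralGroup m) := by
    intro i j
    fin_cases i <;> fin_cases j <;>
      simp [I2Matrix, DihedralGroup.r_pow, -DihedralGroup.r_zero, DihedralGroup.one_def]
  apply Nat.dvd_antisymm
  · exact orderOf_dvd_of_pow_eq_one (cs.simple_mul_simple_pow 0 1)
  · have h := orderOf_map_dvd (cs.lift ⟨_, hlift⟩) (cs.simple 0 * cs.simple 1)
    simpa [cs.lift_apply_simple hlift] using h

/-- The statement for an arbitrary group generated by two involutions `a`, `b` whose product has
order `2k+1`. -/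
theorem odd_dihedral_aux {W : Type*} [Group W] (k : ℕ) (hk : 1 ≤ k) (a b : W)
    (ha : a * a = 1) (hb : b * b = 1) (hord : orderOf (a * b) = 2 * k + 1)
    (hgen : Subgroup.closure {a, b} = ⊤) :
    let r := (a * b) ^ k * a
    r * r = 1 ∧ r ≠ 1 ∧ r * a * r = b ∧ r * b * r = a ∧
    orderOf (r * a) = 2 * k + 1 ∧ orderOf (r * b) = 2 * k + 1 ∧
    Subgroup.closure {r, a} = ⊤ ∧ Subgroup.closure {r, b} = ⊤ := by
  intro r
  have hainv : a⁻¹ = a := inv_eq_of_mul_eq_one_left ha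
  have hbinv : b⁻¹ = b := inv_eq_of_mul_eq_one_left hb
  have hra : r * a = (a * b) ^ k := by simp [r, mul_assoc, ha]
  have hrb : r * b = (a * b) ^ (k + 1) := by simp [r, mul_assoc, pow_succ]
  have hflip : a * (a * b) ^ k * a = ((a * b) ^ k)⁻¹ := by
    have h := conj_pow (i := k) (a := a) (b := a * b)
    rw [hainv] at h
    rw [← h, ← inv_pow, mul_inv_rev, hainv, hbinv, ← mul_assoc, ha, one_mul]
  have hrr : r * r = 1 := by
    calc r * r = (a * b) ^ k * (a * (a * b) ^ k * a) := by simp only [r, mul_assoc]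
      _ = 1 := by rw [hflip, mul_inv_cancel]
  have h1 : r * a * r = b := by
    have ht : (a * b) ^ (2 * k) = b * a := by
      have h : (a * b) ^ (2 * k) * (a * b) = 1 := by
        rw [← pow_succ, ← hord, pow_orderOf_eq_one]
      rw [eq_inv_of_mul_eq_one_left h, mul_inv_rev, hainv, hbinv]
    calc r * a * r = (a * b) ^ (2 * k) * a := by
          rw [hra, two_mul, pow_add, mul_assoc]
      _ = b := by rw [ht, mul_assoc, ha, mul_one]
  have h2 : r * b * r = a := by
    calc r * b * r = (r * r) * a * (r * r) := by rw [← h1]; simp only [mul_assoc]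
      _ = a := by rw [hrr, one_mul, mul_one]
  have ho1 : orderOf (r * a) = 2 * k + 1 := by
    rw [hra, ← hord]
    apply Nat.Coprime.orderOf_pow
    rw [hord]
    simp
  have ho2 : orderOf (r * b) = 2 * k + 1 := by
    rw [hrb, ← hord]
    apply Nat.Coprime.orderOf_pow
    rw [hord, show 2 * k + 1 = k + (k + 1) by ring]
    simp
  refine ⟨hrr, ?_, h1, h2, ho1, ho2, ?_, ?_⟩
  · -- If `r = 1`, then `r * a = a` would have order dividing `2` as well as `2k+1 ≥ 3`.
    intro h
    rw [h, one_mul] at ho1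
    have h := Nat.le_of_dvd two_pos (orderOf_dvd_of_pow_eq_one ((pow_two a).trans ha))
    omega
  · rw [eq_top_iff, ← hgen, Subgroup.closure_le]
    have hr : r ∈ Subgroup.closure {r, a} := Subgroup.subset_closure (by simp)
    have hamem : a ∈ Subgroup.closure {r, a} := Subgroup.subset_closure (by simp)
    rintro x (rfl | rfl)
    · exact hamem
    · have := mul_mem (mul_mem hr hamem) hr
      rwa [h1] at this
  · rw [eq_top_iff, ← hgen, Subgroup.closure_le]
    have hr : r ∈ Subgroup.closure {r, b} := Subgroup.subset_closure (by simp)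
    have hbmem : b ∈ Subgroup.closure {r, b} := Subgroup.subset_closure (by simp)
    rintro x (rfl | rfl)
    · have := mul_mem (mul_mem hr hbmem) hr
      rwa [h2] at this
    · exact hbmem

/-- In the dihedral group of type `I₂(m)` with `m = 2k+1` odd (`k ≥ 1`), the
reflection `r = (s₁s₂)^k s₁` satisfies: `r` is a nontrivial involution, conjugation by `r`
swaps `s₁` and `s₂`, the products `r s₁` and `r s₂` both have order `m`, and `r` together with
either simple reflection generates the whole group. -/
theorem stmt_4 {W : Type*} [Group W] (k : ℕ) (hk : 1 ≤ k)
    (cs : CoxeterSystem (I2Matrix (2 * k + 1) (by omega)) W) :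
    let s₁ := cs.simple 0
    let s₂ := cs.simple 1
    let r := (s₁ * s₂) ^ k * s₁
    r * r = 1 ∧ r ≠ 1 ∧
    r * s₁ * r = s₂ ∧ r * s₂ * r = s₁ ∧
    orderOf (r * s₁) = 2 * k + 1 ∧ orderOf (r * s₂) = 2 * k + 1 ∧
    Subgroup.closure {r, s₁} = ⊤ ∧ Subgroup.closure {r, s₂} = ⊤ := by
  intro s₁ s₂
  refine odd_dihedral_aux k hk s₁ s₂ (cs.simple_mul_simple_self 0) (cs.simple_mul_simple_self 1)
    (orderOf_simple_mul _ cs) ?_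
  rw [← cs.subgroup_closure_range_simple]
  congr 1
  ext x
  simp [s₁, s₂, Fin.exists_fin_two, eq_comm]
end

section
/- Let m = 4k with k ≥ 1. In the dihedral Coxeter group W of type I₂(m) with r := (s₁s₂)^(2k−1) * s₁, the following hold: r * r = 1 and r ≠ 1; orderOf (r * s₁) = m; r * s₂ = s₂ * r (so orderOf (r * s₂) = 2); Subgroup.closure {r, s₁} = ⊤; and Nat.card (Subgroup.closure {r, s₂}) = 4 (a Klein four group). (This verifies the Coxeter diagram of the extension Î₂(m) for m ≡ 0 mod 4: a path with bonds m, m.) -/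
/-- The Coxeter relations only bound the order of `s₁ s₂` by `m`; equality is witnessed by the
homomorphism to `DihedralGroup m` sending `s₁ s₂` to the rotation `r 1`. -/
lemma orderOf_simple_mul_simple {W : Type*} [Group W] (m : ℕ) (hm : 2 ≤ m)
    (cs : CoxeterSystem (I2Matrix m hm) W) : orderOf (cs.simple 0 * cs.simple 1) = m := by
  apply Nat.dvd_antisymm
  · exact orderOf_dvd_of_pow_eq_one (cs.simple_mul_simple_pow 0 1)
  · let f : Fin 2 → DihedralGroup m := ![DihedralGroup.sr 0, DihedralGroup.sr 1]
    have hf : (I2Matrix m hm).IsLiftable f := by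
      intro i j
      fin_cases i <;> fin_cases j <;>
        simp [f, I2Matrix, DihedralGroup.one_def, -DihedralGroup.r_zero]
    have h := orderOf_map_dvd (cs.lift ⟨f, hf⟩) (cs.simple 0 * cs.simple 1)
    simpa [f] using h

lemma card_closure_pair_of_commuting_involutions {G : Type*} [Group G] {x y : G}
    (hx : x * x = 1) (hy : y * y = 1) (hxy : x * y = y * x)
    (hx1 : x ≠ 1) (hy1 : y ≠ 1) (hne : x ≠ y) :
    Nat.card (Subgroup.closure {x, y}) = 4 := by
  have hset : (Subgroup.closure {x, y} : Set G) = {1, x, y, x * y} := by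
    apply Set.Subset.antisymm
    · intro z hz
      obtain ⟨i, j, rfl⟩ : ∃ i j : ℤ, x ^ i * y ^ j = z := by
        refine Subgroup.closure_induction (p := fun z _ => ∃ i j : ℤ, x ^ i * y ^ j = z)
          ?_ ⟨0, 0, by simp⟩ ?_ ?_ hz
        · rintro a (rfl | rfl)
          · exact ⟨1, 0, by simp⟩
          · exact ⟨0, 1, by simp⟩
        · rintro _ _ _ _ ⟨i, j, rfl⟩ ⟨i', j', rfl⟩
          refine ⟨i + i', j + j', ?_⟩
          have h : x ^ i' * y ^ j = y ^ j * x ^ i' :=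
            (show Commute x y from hxy).zpow_zpow i' j
          rw [zpow_add, zpow_add, mul_assoc, mul_assoc, ← mul_assoc (x ^ i'), h, mul_assoc]
        · rintro _ _ ⟨i, j, rfl⟩
          refine ⟨-i, -j, ?_⟩
          rw [mul_inv_rev, zpow_neg, zpow_neg]
          exact ((show Commute x y from hxy).zpow_zpow i j).inv_inv
      have hpow : ∀ a : G, a * a = 1 → ∀ n : ℤ, a ^ n = 1 ∨ a ^ n = a := by
        intro a ha n
        rcases Int.even_or_odd' n with ⟨c, rfl | rfl⟩
        · left; rw [zpow_mul, zpow_two, ha, one_zpow]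
        · right; rw [zpow_add, zpow_mul, zpow_two, ha, one_zpow, one_mul, zpow_one]
      rcases hpow x hx i with h | h <;> rcases hpow y hy j with h' | h' <;> simp [h, h']
    · have hx' : x ∈ Subgroup.closure {x, y} := Subgroup.subset_closure (by simp)
      have hy' : y ∈ Subgroup.closure {x, y} := Subgroup.subset_closure (by simp)
      rintro z (rfl | rfl | rfl | rfl)
      exacts [one_mem _, hx', hy', mul_mem hx' hy']
  have hprod : x * y ≠ 1 := fun h => hne (mul_right_cancel (h.trans hy.symm))
  change Nat.card ((Subgroup.closure {x, y} : Subgroup G) : Set G) = 4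
  rw [hset, Nat.card_coe_set_eq]
  classical
  have hfin : ({1, x, y, x * y} : Set G) = (({1, x, y, x * y} : Finset G) : Set G) := by simp
  rw [hfin, Set.ncard_coe_finset, Finset.card_insert_of_notMem, Finset.card_insert_of_notMem,
    Finset.card_insert_of_notMem, Finset.card_singleton]
  · simpa using hx1
  · simpa using ⟨hne, hy1⟩
  · simpa using ⟨hx1.symm, hy1.symm, hprod.symm⟩

/-- In the dihedral group of type `I₂(m)` with `m = 4k` (`k ≥ 1`), the
reflection `r = (s₁s₂)^(2k−1) s₁` satisfies: `r` is a nontrivial involution, `r s₁` has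
order `m`, `r` commutes with `s₂` (so `r s₂` has order 2), `⟨r, s₁⟩` is the whole group, and
`⟨r, s₂⟩` is a Klein four group (of order 4). -/
theorem stmt_5 {W : Type*} [Group W] (k : ℕ) (hk : 1 ≤ k)
    (cs : CoxeterSystem (I2Matrix (4 * k) (by omega)) W) :
    let s₁ := cs.simple 0
    let s₂ := cs.simple 1
    let r := (s₁ * s₂) ^ (2 * k - 1) * s₁
    r * r = 1 ∧ r ≠ 1 ∧
    orderOf (r * s₁) = 4 * k ∧
    r * s₂ = s₂ * r ∧ orderOf (r * s₂) = 2 ∧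
    Subgroup.closure {r, s₁} = ⊤ ∧
    Nat.card (Subgroup.closure {r, s₂}) = 4 := by
  intro s₁ s₂ r
  have h₁ : s₁ * s₁ = 1 := cs.simple_mul_simple_self 0
  have h₂ : s₂ * s₂ = 1 := cs.simple_mul_simple_self 1
  have ht : orderOf (s₁ * s₂) = 4 * k := orderOf_simple_mul_simple _ _ cs
  have hrs₁ : r * s₁ = (s₁ * s₂) ^ (2 * k - 1) := by
    rw [show r = (s₁ * s₂) ^ (2 * k - 1) * s₁ from rfl, mul_assoc, h₁, mul_one]
  have hrs₂ : r * s₂ = (s₁ * s₂) ^ (2 * k) := by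
    rw [show r = (s₁ * s₂) ^ (2 * k - 1) * s₁ from rfl, mul_assoc, ← pow_succ,
      Nat.sub_add_cancel (by omega)]
  have hcop : (orderOf (s₁ * s₂)).Coprime (2 * k - 1) := by
    rw [ht]
    -- `4k = 2(2k - 1) + 2` and `2k - 1` is odd.
    obtain ⟨l, rfl⟩ : ∃ l, k = l + 1 := ⟨k - 1, by omega⟩
    rw [show 4 * (l + 1) = 2 + (2 * l + 1) * 2 by ring,
      show 2 * (l + 1) - 1 = 2 * l + 1 by omega]
    simp
  have hord₁ : orderOf (r * s₁) = 4 * k := by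
    rw [hrs₁, hcop.orderOf_pow, ht]
  have hord₂ : orderOf (r * s₂) = 2 := by
    rw [hrs₂, orderOf_pow_of_dvd (by omega) (by rw [ht]; exact ⟨2, by ring⟩), ht]
    exact Nat.div_eq_of_eq_mul_left (by omega) (by ring)
  have hinv₁ : s₁⁻¹ = s₁ := inv_eq_of_mul_eq_one_left h₁
  have hinv₂ : s₂⁻¹ = s₂ := inv_eq_of_mul_eq_one_left h₂
  have hrr : r * r = 1 := by
    -- Conjugation by `s₁` inverts `s₁ s₂`.
    have hconj : s₁ * (s₁ * s₂) ^ (2 * k - 1) * s₁ = ((s₁ * s₂) ^ (2 * k - 1))⁻¹ := by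
      have h := conj_pow (i := 2 * k - 1) (a := s₁) (b := s₁ * s₂)
      rw [hinv₁] at h
      rw [← h, ← inv_pow, mul_inv_rev, hinv₁, hinv₂, ← mul_assoc s₁ s₁, h₁, one_mul]
    rw [show r = (s₁ * s₂) ^ (2 * k - 1) * s₁ from rfl, mul_assoc, ← mul_assoc s₁, hconj,
      mul_inv_cancel]
  have hle : ∀ g : W, g * g = 1 → orderOf g ≠ 4 * k := fun g hg h => by
    have := Nat.le_of_dvd two_pos (orderOf_dvd_of_pow_eq_one ((pow_two g).trans hg))
    omega
  have hr1 : r ≠ 1 := fun h => hle s₁ h₁ (by simpa [h] using hord₁)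
  have hs₂1 : s₂ ≠ 1 := fun h => hle s₁ h₁ (by simpa [h] using ht)
  have hne : r ≠ s₂ := fun h => by simp [h, h₂] at hord₂
  have hcomm : r * s₂ = s₂ * r := by
    have h : (r * s₂) * (r * s₂) = 1 := by
      rw [← pow_two, ← hord₂, pow_orderOf_eq_one]
    rw [← inv_eq_of_mul_eq_one_left h, mul_inv_rev, hinv₂, inv_eq_of_mul_eq_one_left hrr]
  refine ⟨hrr, hr1, hord₁, hcomm, hord₂, ?_,
    card_closure_pair_of_commuting_involutions hrr h₂ hcomm hr1 hs₂1 hne⟩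
  have mr : r ∈ Subgroup.closure {r, s₁} := Subgroup.subset_closure (by simp)
  have m₁ : s₁ ∈ Subgroup.closure {r, s₁} := Subgroup.subset_closure (by simp)
  have m₂ : s₂ ∈ Subgroup.closure {r, s₁} := by
    obtain ⟨n, hn⟩ := exists_pow_eq_self_of_coprime hcop.symm
    have h : s₁ * (r * s₁) ^ n = s₂ := by rw [hrs₁, hn, ← mul_assoc, h₁, one_mul]
    rw [← h]
    exact mul_mem m₁ (pow_mem (mul_mem mr m₁) n)
  rw [eq_top_iff, ← cs.subgroup_closure_range_simple, Subgroup.closure_le]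
  rintro _ ⟨i, rfl⟩
  fin_cases i
  exacts [m₁, m₂]
end

section
/- Let m = 4k+2 with k ≥ 1. In the dihedral Coxeter group W of type I₂(m) with r := (s₁s₂)^(2k) * s₁, the following hold: r * r = 1 and r ≠ 1; orderOf (r * s₁) = 2k+1 = m/2; r * s₂ = s₂ * r (so orderOf (r * s₂) = 2); r * s₁ * r = s₂ * s₁ * s₂; the subgroup Subgroup.closure {r, s₁} has index 2 in W (it is a dihedral group of order 2(2k+1), isomorphic to I₂(2k+1)); and Nat.card (Subgroup.closure {r, s₂}) = 4. (This verifies the Coxeter diagram of the extension Î₂(m) for m ≡ 2 mod 4: a path with bonds m/2, m.) -/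
/-- If `a` and `b` are involutions and `a` is not a power of `a * b`, then `a` and `b` generate a
dihedral group: the map `r i ↦ (a * b) ^ i`, `sr i ↦ a * (a * b) ^ i` is an isomorphism onto the
subgroup they generate. Only the resulting order is recorded. -/
theorem card_closure_pair_of_involutions {G : Type*} [Group G] {a b : G} {n : ℕ}
    (ha : a * a = 1) (hb : b * b = 1) (hn : orderOf (a * b) = n)
    (hab : a ∉ Subgroup.zpowers (a * b)) :
    Nat.card (Subgroup.closure {a, b}) = 2 * n := by
  set c := a * b with hc
  have hainv : a⁻¹ = a := inv_eq_of_mul_eq_one_left ha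
  have hbinv : b⁻¹ = b := inv_eq_of_mul_eq_one_left hb
  have hconj : ∀ i : ℤ, c ^ i * a = a * c ^ (-i) := by
    intro i
    have h : a * c * a⁻¹ = c⁻¹ := by
      rw [hc, mul_inv_rev, hainv, hbinv, ← mul_assoc, ha, one_mul]
    have h2 := conj_zpow (i := -i) (a := a) (b := c)
    rw [h, inv_zpow', neg_neg] at h2
    rw [h2, inv_mul_cancel_right]
  have hcast : ∀ (i : ZMod n) (j : ℤ), (j : ZMod n) = i → c ^ (i.cast : ℤ) = c ^ j := by
    intro i j h
    rw [zpow_eq_zpow_iff_modEq, hn, ← ZMod.intCast_eq_intCast_iff, ZMod.intCast_zmod_cast, h]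
  have hinj : ∀ i j : ZMod n, c ^ (i.cast : ℤ) = c ^ (j.cast : ℤ) → i = j := by
    intro i j h
    rw [zpow_eq_zpow_iff_modEq, hn, ← ZMod.intCast_eq_intCast_iff] at h
    simpa using h
  let f : DihedralGroup n → G := fun
    | .r i => c ^ (i.cast : ℤ)
    | .sr i => a * c ^ (i.cast : ℤ)
  let F : DihedralGroup n →* G := MonoidHom.mk' f <| by
    have hadd : ∀ i j : ZMod n, c ^ ((i + j).cast : ℤ) = c ^ (i.cast : ℤ) * c ^ (j.cast : ℤ) := by
      intro i j
      rw [← zpow_add]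
      exact hcast _ _ (by simp)
    have hsub : ∀ i j : ZMod n, c ^ ((i - j).cast : ℤ) = c ^ (-j.cast : ℤ) * c ^ (i.cast : ℤ) := by
      intro i j
      rw [← zpow_add]
      exact hcast _ _ (by simp; ring)
    rintro (i | i) (j | j)
    · exact hadd i j
    · change a * c ^ ((j - i).cast : ℤ) = c ^ (i.cast : ℤ) * (a * c ^ (j.cast : ℤ))
      rw [hsub, ← mul_assoc, ← mul_assoc, hconj]
    · change a * c ^ ((i + j).cast : ℤ) = a * c ^ (i.cast : ℤ) * c ^ (j.cast : ℤ)
      rw [hadd, mul_assoc]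
    · change c ^ ((j - i).cast : ℤ) = a * c ^ (i.cast : ℤ) * (a * c ^ (j.cast : ℤ))
      rw [hsub, mul_assoc, ← mul_assoc (c ^ (i.cast : ℤ)), hconj, ← mul_assoc, ← mul_assoc,
        ha, one_mul]
  have hr : ∀ i, F (.r i) = c ^ (i.cast : ℤ) := fun _ => rfl
  have hsr : ∀ i, F (.sr i) = a * c ^ (i.cast : ℤ) := fun _ => rfl
  -- A rotation and a reflection cannot have the same image: `a` would be a power of `c`.
  have hne : ∀ i j : ℤ, c ^ i ≠ a * c ^ j := fun i j h =>
    hab ⟨i - j, by simp only [zpow_sub, h, mul_inv_cancel_right]⟩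
  have hF : Function.Injective F := by
    rintro (i | i) (j | j) h
    · rw [hinj i j h]
    · exact absurd h (hne _ _)
    · exact absurd h.symm (hne _ _)
    · rw [hinj i j (mul_left_cancel h)]
  have hrange : Subgroup.closure {a, b} = F.range := by
    have hac : a ∈ Subgroup.closure {a, b} := Subgroup.subset_closure (by simp)
    have hcc : c ∈ Subgroup.closure {a, b} := mul_mem hac (Subgroup.subset_closure (by simp))
    apply le_antisymm
    · rw [Subgroup.closure_le]
      rintro x (rfl | rfl)
      · exact ⟨.sr 0, by rw [hsr, hcast 0 0 (by simp)]; simp⟩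
      · exact ⟨.sr 1, by rw [hsr, hcast 1 1 (by simp), zpow_one, hc, ← mul_assoc, ha, one_mul]⟩
    · rintro _ ⟨i | i, rfl⟩
      · exact zpow_mem hcc _
      · exact mul_mem hac (zpow_mem hcc _)
  rw [hrange, ← DihedralGroup.nat_card]
  exact (Nat.card_congr (MonoidHom.ofInjective hF).toEquiv).symm

/-- Parity separates an element of odd length from the powers of its product with another one. -/
theorem notMem_zpowers_mul_of_parity {B W : Type*} [Group W] {M : CoxeterMatrix B}
    (cs : CoxeterSystem M W) {a b : W} (ha : cs.lengthParity a = Multiplicative.ofAdd 1)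
    (hb : cs.lengthParity b = Multiplicative.ofAdd 1) :
    a ∉ Subgroup.zpowers (a * b) := by
  rintro ⟨i, hi⟩
  have h1 : (Multiplicative.ofAdd 1 : Multiplicative (ZMod 2)) * Multiplicative.ofAdd 1 = 1 := by
    decide
  have h := congrArg cs.lengthParity hi
  simp only [map_zpow, map_mul, ha, hb, h1, one_zpow] at h
  exact absurd h (by decide)

theorem orderOf_simple_mul_simple_I2 {W : Type*} [Group W] {m : ℕ} {hm : 2 ≤ m}
    (cs : CoxeterSystem (I2Matrix m hm) W) :
    orderOf (cs.simple 0 * cs.simple 1) = m := by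
  apply Nat.dvd_antisymm
  · exact orderOf_dvd_of_pow_eq_one (cs.simple_mul_simple_pow 0 1)
  · let g : Fin 2 → DihedralGroup m := ![.sr 0, .sr 1]
    have hg : (I2Matrix m hm).IsLiftable g := by
      intro i j
      fin_cases i <;> fin_cases j <;> simp [g, I2Matrix, DihedralGroup.r_pow]
    have h := orderOf_map_dvd (cs.lift ⟨g, hg⟩) (cs.simple 0 * cs.simple 1)
    rw [map_mul, cs.lift_apply_simple hg, cs.lift_apply_simple hg] at h
    simpa [g, DihedralGroup.orderOf_r_one] using h

/-- In the dihedral group of type `I₂(m)` with `m = 4k+2` (`k ≥ 1`), the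
reflection `r = (s₁s₂)^(2k) s₁` satisfies: `r` is a nontrivial involution, `r s₁` has order
`2k+1 = m/2`, `r` commutes with `s₂` (so `r s₂` has order 2), `r s₁ r = s₂ s₁ s₂`,
`⟨r, s₁⟩` has index 2 in `W` (it is a dihedral group of order `2(2k+1)`), and `⟨r, s₂⟩` is a
Klein four group (of order 4). -/
theorem stmt_6 {W : Type*} [Group W] (k : ℕ) (hk : 1 ≤ k)
    (cs : CoxeterSystem (I2Matrix (4 * k + 2) (by omega)) W) :
    let s₁ := cs.simple 0
    let s₂ := cs.simple 1
    let r := (s₁ * s₂) ^ (2 * k) * s₁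
    r * r = 1 ∧ r ≠ 1 ∧
    orderOf (r * s₁) = 2 * k + 1 ∧ 2 * k + 1 = (4 * k + 2) / 2 ∧
    r * s₂ = s₂ * r ∧ orderOf (r * s₂) = 2 ∧
    r * s₁ * r = s₂ * s₁ * s₂ ∧
    (Subgroup.closure {r, s₁}).index = 2 ∧
    Nat.card (Subgroup.closure {r, s₁}) = 2 * (2 * k + 1) ∧
    Nat.card (Subgroup.closure {r, s₂}) = 4 := by
  intro s₁ s₂ r
  have h1 : s₁ * s₁ = 1 := cs.simple_mul_simple_self 0
  have h2 : s₂ * s₂ = 1 := cs.simple_mul_simple_self 1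
  have i1 : s₁⁻¹ = s₁ := cs.inv_simple 0
  have i2 : s₂⁻¹ = s₂ := cs.inv_simple 1
  have ht : orderOf (s₁ * s₂) = 4 * k + 2 := orderOf_simple_mul_simple_I2 cs
  have htm : (s₁ * s₂) ^ (4 * k + 2) = 1 := ht ▸ pow_orderOf_eq_one _
  have hconj : ∀ n : ℕ, s₁ * (s₁ * s₂) ^ n * s₁ = ((s₁ * s₂) ^ n)⁻¹ := by
    intro n
    have h := conj_pow (i := n) (a := s₁) (b := s₁ * s₂)
    rw [i1, ← mul_assoc s₁ s₁ s₂, h1, one_mul] at h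
    rw [← h, ← inv_pow, mul_inv_rev, i1, i2]
  have hrs1 : r * s₁ = (s₁ * s₂) ^ (2 * k) := by
    simp only [r]; rw [mul_assoc, h1, mul_one]
  have hrs2 : r * s₂ = (s₁ * s₂) ^ (2 * k + 1) := by
    simp only [r]; rw [mul_assoc, pow_succ]
  have hrr : r * r = 1 := by
    have h : r * r = (s₁ * s₂) ^ (2 * k) * (s₁ * (s₁ * s₂) ^ (2 * k) * s₁) := by
      simp only [r, mul_assoc]
    rw [h, hconj, mul_inv_cancel]
  have ho1 : orderOf (r * s₁) = 2 * k + 1 := by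
    have hgcd : Nat.gcd (4 * k + 2) (2 * k) = 2 := by
      rw [show 4 * k + 2 = 2 + 2 * (2 * k) by ring, Nat.gcd_add_mul_right_left]
      simp
    rw [hrs1, orderOf_pow' _ (by omega), ht, hgcd]
    omega
  have ho2 : orderOf (r * s₂) = 2 := by
    rw [hrs2, orderOf_pow_of_dvd (by omega) (by rw [ht]; exact ⟨2, by ring⟩), ht]
    exact Nat.div_eq_of_eq_mul_left (by omega) (by ring)
  have hp1 : cs.lengthParity s₁ = Multiplicative.ofAdd 1 := cs.lengthParity_simple 0
  have hp2 : cs.lengthParity s₂ = Multiplicative.ofAdd 1 := cs.lengthParity_simple 1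
  have hpr : cs.lengthParity r = Multiplicative.ofAdd 1 := by
    have h : (Multiplicative.ofAdd 1 : Multiplicative (ZMod 2)) * Multiplicative.ofAdd 1 = 1 := by
      decide
    simp only [r, map_mul, map_pow, hp1, hp2, h, one_pow, one_mul]
  have hr1 : r ≠ 1 := by
    intro h
    rw [h, map_one] at hpr
    exact absurd hpr (by decide)
  have hcard1 := card_closure_pair_of_involutions hrr h1 ho1
    (notMem_zpowers_mul_of_parity cs hpr hp1)
  have hcard2 := card_closure_pair_of_involutions hrr h2 ho2
    (notMem_zpowers_mul_of_parity cs hpr hp2)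
  have hcardW : Nat.card W = 2 * (4 * k + 2) := by
    have htop : Subgroup.closure {s₁, s₂} = ⊤ := by
      rw [← cs.subgroup_closure_range_simple]
      congr 1
      ext x
      simp [s₁, s₂, Fin.exists_fin_two, eq_comm]
    rw [← card_closure_pair_of_involutions h1 h2 ht (notMem_zpowers_mul_of_parity cs hp1 hp2),
      htop, Subgroup.card_top]
  refine ⟨hrr, hr1, ho1, by omega, ?_, ho2, ?_, ?_, hcard1, hcard2⟩
  · -- `r * s₂` has order two, hence equals its own inverse `s₂ * r`.
    have h : (r * s₂) * (r * s₂) = 1 := by rw [← pow_two, ← ho2, pow_orderOf_eq_one]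
    rw [← inv_eq_of_mul_eq_one_left h, mul_inv_rev, i2, inv_eq_of_mul_eq_one_left hrr]
  · -- Both sides equal `t ^ (4k) * s₁ = t ^ (-2) * s₁`, where `t = s₁ * s₂`.
    have h : (s₁ * s₂) ^ (4 * k) = s₂ * s₁ * (s₂ * s₁) := by
      rw [pow_add] at htm
      rw [eq_inv_of_mul_eq_one_left htm, pow_two, mul_inv_rev, mul_inv_rev, i1, i2]
    calc r * s₁ * r = (s₁ * s₂) ^ (4 * k) * s₁ := by
          rw [hrs1]
          simp only [r]
          rw [← mul_assoc, ← pow_add]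
          congr 2
          ring
      _ = s₂ * s₁ * s₂ := by rw [h]; simp only [mul_assoc, h1, mul_one]
  · have h := Subgroup.card_mul_index (Subgroup.closure {r, s₁})
    rw [hcard1, hcardW] at h
    exact Nat.eq_of_mul_eq_mul_left (show 0 < 2 * (2 * k + 1) by omega) (h.trans (by ring))
end

section
/- For every integer m ≥ 3, with Ŵₘ the Coxeter group of the extended Coxeter matrix M̂ₘ and Qₘ the normal closure of qₘ as below, the subgroup Qₘ intersects every proper standard parabolic subgroup of Ŵₘ trivially: for every proper subset I ⊊ {0,1,2}, Qₘ ⊓ Subgroup.closure {ŝᵢ : i ∈ I} = ⊥. -/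
/-!
The group `Ŵₘ` maps to the dihedral group of order `2m` by `ŝ₁ ↦ sr 0`, `ŝ₂ ↦ sr 1` and
`ŝ₀ ↦ sr (-k)` with `k = ⌊(m-1)/2⌋`. The value for `ŝ₀` is the one forced by `qₘ ↦ 1`, so `Qₘ` lies
in the kernel. The image of `ŝᵢ ŝⱼ` is a rotation whose order is exactly `M̂ₘ i j`
(`orderOf_rotation_I2hat`): this is the divisibility computation behind the choice of `M̂ₘ`, and it
gives both that the map is well defined and that it is injective on each parabolic subgroup of
rank two, since an element of `⟨ŝᵢ, ŝⱼ⟩` is `(ŝᵢ ŝⱼ)ⁿ`, with image `1` only if `M̂ₘ i j ∣ n`, or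
`(ŝᵢ ŝⱼ)ⁿ ŝᵢ`, which maps to a reflection (`eq_one_of_mem_closure_pair`).
-/


/-- The entry `M̂ₘ 0 1` of the Coxeter matrix of the extension `Î₂(m)`:
`m` if `m` is odd, `m` if `m ≡ 0 (mod 4)`, and `m/2` if `m ≡ 2 (mod 4)`. -/
def I2hatEntry01 (m : ℕ) : ℕ :=
  if m % 2 = 1 then m else if m % 4 = 0 then m else m / 2

/-- The entry `M̂ₘ 0 2` of the Coxeter matrix of the extension `Î₂(m)`:
`m` if `m` is odd and `2` if `m` is even. -/
def I2hatEntry02 (m : ℕ) : ℕ :=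
  if m % 2 = 1 then m else 2

/-- The Coxeter matrix `M̂ₘ` of the extension `Î₂(m)` of the dihedral group `I₂(m)`
(for `3 ≤ m`), on the index set `{0, 1, 2}`, with `M̂ₘ 1 2 = m` and the entries
`M̂ₘ 0 1`, `M̂ₘ 0 2` as prescribed by the class of `m` mod 4. -/
def I2hatMatrix (m : ℕ) (hm : 3 ≤ m) : CoxeterMatrix (Fin 3) where
  M := !![1, I2hatEntry01 m, I2hatEntry02 m;
          I2hatEntry01 m, 1, m;
          I2hatEntry02 m, m, 1]
  isSymm := by
    ext i j
    fin_cases i <;> fin_cases j <;> rfl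
  diagonal i := by fin_cases i <;> rfl
  off_diagonal i j hij := by
    fin_cases i <;> fin_cases j <;>
      simp_all [I2hatEntry01, I2hatEntry02] <;>
      (try split_ifs) <;> omega

/-- Elements of the subgroup generated by two involutions `a`, `b` are `(ab)ⁿ` or `(ab)ⁿa`. -/
theorem exists_zpow_of_mem_closure_pair {G : Type*} [Group G] {a b : G}
    (ha : a * a = 1) (hb : b * b = 1) {w : G} (hw : w ∈ Subgroup.closure {a, b}) :
    ∃ n : ℤ, w = (a * b) ^ n ∨ w = (a * b) ^ n * a := by
  have ha' : a⁻¹ = a := inv_eq_of_mul_eq_one_left ha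
  have hb' : b⁻¹ = b := inv_eq_of_mul_eq_one_left hb
  have hba : b = (a * b) ^ (-1 : ℤ) * a := by simp [ha', hb', mul_assoc, ha]
  have step_a : ∀ w : G, (∃ n : ℤ, w = (a * b) ^ n ∨ w = (a * b) ^ n * a) →
      ∃ n : ℤ, w * a = (a * b) ^ n ∨ w * a = (a * b) ^ n * a := by
    rintro w ⟨n, rfl | rfl⟩
    · exact ⟨n, Or.inr rfl⟩
    · exact ⟨n, Or.inl (by rw [mul_assoc, ha, mul_one])⟩
  have step_b : ∀ w : G, (∃ n : ℤ, w = (a * b) ^ n ∨ w = (a * b) ^ n * a) →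
      ∃ n : ℤ, w * b = (a * b) ^ n ∨ w * b = (a * b) ^ n * a := by
    rintro w ⟨n, rfl | rfl⟩
    · refine ⟨n - 1, Or.inr ?_⟩
      calc (a * b) ^ n * b = (a * b) ^ n * ((a * b) ^ (-1 : ℤ) * a) := congrArg _ hba
        _ = (a * b) ^ (n - 1) * a := by rw [← mul_assoc, ← zpow_add, sub_eq_add_neg]
    · exact ⟨n + 1, Or.inl (by rw [mul_assoc, zpow_add_one])⟩
  induction hw using Subgroup.closure_induction_right with
  | one => exact ⟨0, Or.inl (by simp)⟩
  | mul_right x hx y hy ih =>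
    rcases hy with rfl | rfl
    · exact step_a _ ih
    · exact step_b _ ih
  | mul_inv_cancel x hx y hy ih =>
    rcases hy with rfl | rfl
    · rw [ha']; exact step_a _ ih
    · rw [hb']; exact step_b _ ih

/-- A homomorphism to a dihedral group sending the involutions `a`, `b` to reflections and
preserving the order of `ab` is injective on the subgroup generated by `a` and `b`. -/
theorem eq_one_of_mem_closure_pair {G : Type*} [Group G] {m : ℕ} (f : G →* DihedralGroup m)
    {a b : G} {x y : ZMod m} (ha : a * a = 1) (hb : b * b = 1)
    (hfa : f a = DihedralGroup.sr x) (hfb : f b = DihedralGroup.sr y)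
    (hab : (a * b) ^ orderOf (DihedralGroup.r (y - x)) = 1)
    {w : G} (hw : w ∈ Subgroup.closure {a, b}) (hfw : f w = 1) : w = 1 := by
  have hfab : f (a * b) = DihedralGroup.r (y - x) := by
    rw [map_mul, hfa, hfb, DihedralGroup.sr_mul_sr]
  obtain ⟨n, rfl | rfl⟩ := exists_zpow_of_mem_closure_pair ha hb hw
  · rw [map_zpow, hfab, ← orderOf_dvd_iff_zpow_eq_one] at hfw
    exact orderOf_dvd_iff_zpow_eq_one.mp
      ((Int.natCast_dvd_natCast.mpr (orderOf_dvd_of_pow_eq_one hab)).trans hfw)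
  · -- a rotation times a reflection is a reflection, never the identity
    rw [map_mul, map_zpow, hfab, hfa, DihedralGroup.r_zpow, DihedralGroup.r_mul_sr,
      DihedralGroup.one_def] at hfw
    cases hfw

/-- The indices of the reflections of the dihedral group that are the images of `ŝ₀`, `ŝ₁`, `ŝ₂`
under the canonical projection. -/
def I2hatIndex (m : ℕ) : Fin 3 → ZMod m :=
  ![-(((m - 1) / 2 : ℕ) : ZMod m), 0, 1]

theorem gcd_half_I2hat (m : ℕ) (hm : 3 ≤ m) :
    m / m.gcd ((m - 1) / 2) = I2hatEntry01 m := by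
  unfold I2hatEntry01
  split_ifs with h1 h2
  · have : m.gcd ((m - 1) / 2) = 1 := by
      obtain ⟨t, rfl⟩ : ∃ t, m = t * 2 + 1 := ⟨m / 2, by omega⟩
      have : (t * 2 + 1 - 1) / 2 = t := by omega
      rw [this]
      simp
    rw [this, Nat.div_one]
  · have : m.gcd ((m - 1) / 2) = 1 := by
      obtain ⟨t, rfl⟩ : ∃ t, m = (2 * t + 1) * 2 + 2 := ⟨m / 4 - 1, by omega⟩
      have : ((2 * t + 1) * 2 + 2 - 1) / 2 = 2 * t + 1 := by omega
      rw [this]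
      simp
    rw [this, Nat.div_one]
  · have : m.gcd ((m - 1) / 2) = 2 := by
      obtain ⟨t, rfl⟩ : ∃ t, m = (2 * t) * 2 + 2 := ⟨m / 4, by omega⟩
      have : ((2 * t) * 2 + 2 - 1) / 2 = 2 * t := by omega
      rw [this]
      simp
    rw [this]

theorem gcd_half_succ_I2hat (m : ℕ) (hm : 3 ≤ m) :
    m / m.gcd ((m - 1) / 2 + 1) = I2hatEntry02 m := by
  unfold I2hatEntry02
  split_ifs with h1
  · have : m.gcd ((m - 1) / 2 + 1) = 1 := by
      obtain ⟨t, rfl⟩ : ∃ t, m = t + (t + 1) := ⟨m / 2, by omega⟩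
      have : (t + (t + 1) - 1) / 2 + 1 = t + 1 := by omega
      rw [this]
      simp
    rw [this, Nat.div_one]
  · obtain ⟨t, rfl⟩ : ∃ t, m = 2 * t := ⟨m / 2, by omega⟩
    have : (2 * t - 1) / 2 + 1 = t := by omega
    rw [this, Nat.gcd_eq_right (Dvd.intro_left 2 rfl)]
    exact Nat.mul_div_cancel _ (by omega)

/-- The entries of `M̂ₘ` are exactly the orders of the products of the image reflections. -/
theorem orderOf_rotation_I2hat (m : ℕ) (hm : 3 ≤ m) (i j : Fin 3) :
    orderOf (DihedralGroup.r (I2hatIndex m j - I2hatIndex m i)) = I2hatMatrix m hm i j := by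
  have hr : ∀ x : ZMod m, orderOf (DihedralGroup.r x) = addOrderOf x := fun x => by
    rw [← orderOf_ofAdd_eq_addOrderOf]
    refine orderOf_eq_orderOf_iff.mpr fun n => ?_
    rw [DihedralGroup.r_pow, DihedralGroup.one_def, DihedralGroup.r.injEq, ← ofAdd_nsmul,
      ofAdd_eq_one, nsmul_eq_mul, mul_comm]
  have h01 : addOrderOf (((m - 1) / 2 : ℕ) : ZMod m) = I2hatEntry01 m := by
    rw [ZMod.addOrderOf_coe _ (by omega), gcd_half_I2hat m hm]
  have h02 : addOrderOf ((((m - 1) / 2 : ℕ) : ZMod m) + 1) = I2hatEntry02 m := by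
    rw [← Nat.cast_add_one, ZMod.addOrderOf_coe _ (by omega), gcd_half_succ_I2hat m hm]
  have h02' : addOrderOf (1 + (((m - 1) / 2 : ℕ) : ZMod m)) = I2hatEntry02 m := by
    rw [add_comm, h02]
  have h02'' : addOrderOf (-(((m - 1) / 2 : ℕ) : ZMod m) - 1) = I2hatEntry02 m := by
    rw [← addOrderOf_neg, neg_sub, sub_neg_eq_add, h02']
  have h12 : addOrderOf (1 : ZMod m) = m := ZMod.addOrderOf_one m
  rw [hr]
  fin_cases i <;> fin_cases j <;>
    simp [I2hatIndex, I2hatMatrix, h01, h02', h02'', h12]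

/-- For every `m ≥ 3`, with `Ŵₘ` the Coxeter group of the extended Coxeter
matrix `M̂ₘ` and `Qₘ` the normal closure of `qₘ = ŝ₀ (ŝ₁ŝ₂)^⌊(m−1)/2⌋ ŝ₁` (the kernel of the
canonical projection `Ŵₘ → I₂(m)`), the subgroup `Qₘ` intersects every proper standard
parabolic subgroup of `Ŵₘ` trivially. -/
theorem stmt_12 (m : ℕ) (hm : 3 ≤ m) {Wh : Type*} [Group Wh]
    (cs : CoxeterSystem (I2hatMatrix m hm) Wh) :
    let s₀ := cs.simple 0
    let s₁ := cs.simple 1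
    let s₂ := cs.simple 2
    let Q := Subgroup.normalClosure {s₀ * (s₁ * s₂) ^ ((m - 1) / 2) * s₁}
    ∀ I : Set (Fin 3), I ≠ Set.univ →
      Q ⊓ Subgroup.closure {w : Wh | ∃ i ∈ I, cs.simple i = w} = ⊥ := by
  intro s₀ s₁ s₂ Q I hI
  have hlift : (I2hatMatrix m hm).IsLiftable
      (fun i => (DihedralGroup.sr (I2hatIndex m i) : DihedralGroup m)) := fun i j => by
    rw [DihedralGroup.sr_mul_sr, ← orderOf_rotation_I2hat m hm i j, pow_orderOf_eq_one]
  let f : Wh →* DihedralGroup m := cs.lift ⟨_, hlift⟩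
  have hf : ∀ i, f (cs.simple i) = DihedralGroup.sr (I2hatIndex m i) :=
    fun i => cs.lift_apply_simple hlift i
  have hQ : Q ≤ f.ker := by
    refine Subgroup.normalClosure_le_normal ?_
    rw [Set.singleton_subset_iff, SetLike.mem_coe, MonoidHom.mem_ker]
    simp only [s₀, s₁, s₂, map_mul, map_pow, hf]
    simp [I2hatIndex]
  obtain ⟨a, b, hab⟩ : ∃ a b : Fin 3, ∀ i ∈ I, i = a ∨ i = b := by
    obtain ⟨j, hj⟩ := (Set.ne_univ_iff_exists_notMem I).mp hI
    have key : ∀ j : Fin 3, ∃ a b : Fin 3, ∀ i, i ≠ j → i = a ∨ i = b := by decide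
    obtain ⟨a, b, h⟩ := key j
    exact ⟨a, b, fun i hi => h i (fun e => hj (e ▸ hi))⟩
  have hle : Subgroup.closure {w : Wh | ∃ i ∈ I, cs.simple i = w} ≤
      Subgroup.closure {cs.simple a, cs.simple b} := by
    refine Subgroup.closure_mono ?_
    rintro w ⟨i, hi, rfl⟩
    rcases hab i hi with rfl | rfl <;> simp
  rw [eq_bot_iff]
  rintro w ⟨hwQ, hwI⟩
  refine Subgroup.mem_bot.mpr (eq_one_of_mem_closure_pair f (cs.simple_mul_simple_self a)
    (cs.simple_mul_simple_self b) (hf a) (hf b) ?_ (hle hwI) (hQ hwQ))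
  rw [orderOf_rotation_I2hat m hm a b]
  exact cs.simple_mul_simple_pow a b
end

section
/- Let m ≥ 3 be odd and consider the group Ŵ₂ₘ of the extension Î₂(2m) (note 2m ≡ 2 mod 4, so its Coxeter matrix satisfies M̂₂ₘ 0 1 = m, M̂₂ₘ 0 2 = 2, M̂₂ₘ 1 2 = 2m). Then: (1) there is a unique group homomorphism φ : Ŵ₂ₘ → ℤ/2ℤ with φ(ŝ₀) = 0, φ(ŝ₁) = 0 and φ(ŝ₂) = 1; (2) the kernel of φ equals the subgroup Subgroup.closure {ŝ₁, ŝ₂ * ŝ₁ * ŝ₂, ŝ₀}, which therefore has index 2 in Ŵ₂ₘ; (3) this kernel contains the normal subgroup Q₂ₘ (the normal closure of ŝ₀ * (ŝ₁ŝ₂)^(m−1) * ŝ₁). (This index-2 subgroup is the copy of the extension Î₂(m) inside Î₂(2m) underlying the isometry T(I₂(2g+1)) ≅ T(I₂(4g+2)).) -/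
/-!
Sending `s₀, s₁` to `0` and `s₂` to `1` respects the Coxeter relations because the two relations
between `s₂` and another generator, `(s₀ s₂) ^ 2` and `(s₁ s₂) ^ (2 m)`, have even exponent; this
gives the homomorphism `φ`. Let `H` be the subgroup generated by `s₁`, `s₂ s₁ s₂` and `s₀`. Clearly
`H ≤ ker φ`. Since `s₀` commutes with `s₂`, left multiplication by any generator permutes the
set `H ∪ s₂ H`, which is therefore the whole group. As `φ` does not vanish on `s₂ H`, the kernel is
exactly `H`. Finally `s₀ (s₁ s₂) ^ (m - 1) s₁` lies in `ker φ` because `m - 1` is even, and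
kernels are normal.
-/

/-- Let `m ≥ 3` be odd and consider the group `Ŵ₂ₘ` of the extension
`Î₂(2m)` (note `2m ≡ 2 mod 4`, so the Coxeter matrix satisfies `M̂ 0 1 = m`, `M̂ 0 2 = 2`,
`M̂ 1 2 = 2m`). Then:
(1) there is a unique homomorphism `φ : Ŵ₂ₘ → ℤ/2ℤ` with `φ(ŝ₀) = 0`, `φ(ŝ₁) = 0`,
`φ(ŝ₂) = 1`;
(2) its kernel equals `⟨ŝ₁, ŝ₂ŝ₁ŝ₂, ŝ₀⟩`, which therefore has index 2 in `Ŵ₂ₘ`;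
(3) this kernel contains `Q₂ₘ`, the normal closure of `ŝ₀ (ŝ₁ŝ₂)^(m−1) ŝ₁`. -/
theorem stmt_19 (m : ℕ) (hm : 3 ≤ m) (hodd : Odd m)
    {Wh : Type*} [Group Wh] (cs : CoxeterSystem (I2hatMatrix (2 * m) (by omega)) Wh) :
    let s₀ := cs.simple 0
    let s₁ := cs.simple 1
    let s₂ := cs.simple 2
    (∃! φ : Wh →* Multiplicative (ZMod 2),
        φ s₀ = 1 ∧ φ s₁ = 1 ∧ φ s₂ = Multiplicative.ofAdd 1) ∧
    ∀ φ : Wh →* Multiplicative (ZMod 2),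
      φ s₀ = 1 → φ s₁ = 1 → φ s₂ = Multiplicative.ofAdd 1 →
      φ.ker = Subgroup.closure {s₁, s₂ * s₁ * s₂, s₀} ∧
      (Subgroup.closure {s₁, s₂ * s₁ * s₂, s₀}).index = 2 ∧
      Subgroup.normalClosure {s₀ * (s₁ * s₂) ^ (m - 1) * s₁} ≤
        Subgroup.closure {s₁, s₂ * s₁ * s₂, s₀} := by
  intro s₀ s₁ s₂
  have h02 : Commute s₀ s₂ := by
    have h := cs.simple_mul_simple_pow 0 2
    have hM : (I2hatMatrix (2 * m) (by omega)) 0 2 = 2 := by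
      change I2hatEntry02 (2 * m) = 2
      rw [I2hatEntry02, if_neg (by omega)]
    rw [hM, pow_two] at h
    have h' := mul_eq_one_iff_eq_inv.mp h
    rwa [mul_inv_rev, cs.inv_simple, cs.inv_simple] at h'
  have h22 : s₂ * s₂ = 1 := cs.simple_mul_simple_self 2
  refine ⟨?_, ?_⟩
  · have hsq : ∀ x : Multiplicative (ZMod 2), x ^ 2 = 1 := by decide
    have hlift : (I2hatMatrix (2 * m) (by omega)).IsLiftable
        (![1, 1, Multiplicative.ofAdd 1] : Fin 3 → Multiplicative (ZMod 2)) := by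
      have hE : I2hatEntry02 (2 * m) = 2 := by
        rw [I2hatEntry02, if_neg (by omega)]
      intro i j
      fin_cases i <;> fin_cases j <;>
        simp [I2hatMatrix, hE, pow_mul, hsq]
      decide
    refine ⟨cs.lift ⟨_, hlift⟩, ⟨?_, ?_, ?_⟩, ?_⟩
    · exact cs.lift_apply_simple hlift 0
    · exact cs.lift_apply_simple hlift 1
    · exact cs.lift_apply_simple hlift 2
    · rintro ψ ⟨h0, h1, h2⟩
      refine cs.ext_simple fun i => ?_
      rw [cs.lift_apply_simple hlift]
      fin_cases i
      · exact h0
      · exact h1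
      · exact h2
  · intro φ h0 h1 h2
    set H := Subgroup.closure {s₁, s₂ * s₁ * s₂, s₀} with hH
    have m1 : s₁ ∈ H := Subgroup.subset_closure (by simp)
    have m2 : s₂ * s₁ * s₂ ∈ H := Subgroup.subset_closure (by simp)
    have m0 : s₀ ∈ H := Subgroup.subset_closure (by simp)
    have hle : H ≤ φ.ker := by
      rw [hH, Subgroup.closure_le]
      rintro x (rfl | rfl | rfl)
      · exact h1
      · change φ (s₂ * s₁ * s₂) = 1
        rw [map_mul, map_mul, h1, mul_one, ← map_mul, h22, map_one]
      · exact h0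
    -- The group is the union of the two cosets `H` and `s₂ H`.
    have hcov : ∀ w : Wh, w ∈ H ∨ s₂ * w ∈ H := by
      intro w
      induction w using cs.simple_induction_left with
      | one => exact Or.inl H.one_mem
      | mul_simple_left w i ih =>
        fin_cases i
        · change s₀ * w ∈ H ∨ s₂ * (s₀ * w) ∈ H
          refine ih.imp (H.mul_mem m0) fun h => ?_
          rw [← mul_assoc, ← h02.eq, mul_assoc]
          exact H.mul_mem m0 h
        · change s₁ * w ∈ H ∨ s₂ * (s₁ * w) ∈ H
          refine ih.imp (H.mul_mem m1) fun h => ?_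
          have e : s₂ * (s₁ * w) = s₂ * s₁ * s₂ * (s₂ * w) := by
            rw [mul_assoc (s₂ * s₁), ← mul_assoc s₂ s₂, h22, one_mul, mul_assoc]
          rw [e]
          exact H.mul_mem m2 h
        · change s₂ * w ∈ H ∨ s₂ * (s₂ * w) ∈ H
          rw [← mul_assoc, h22, one_mul]
          exact ih.symm
    have hker : φ.ker = H := by
      refine le_antisymm (fun w hw => ?_) hle
      refine (hcov w).resolve_right fun h => ?_
      have h' : φ (s₂ * w) = 1 := hle h
      rw [map_mul, h2, show φ w = 1 from hw] at h'
      exact absurd h' (by decide)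
    refine ⟨hker, ?_, ?_⟩
    · have hsurj : Function.Surjective φ := by
        have hall : ∀ x : Multiplicative (ZMod 2), x = 1 ∨ x = Multiplicative.ofAdd 1 := by
          decide
        intro x
        rcases hall x with rfl | rfl
        · exact ⟨1, map_one φ⟩
        · exact ⟨s₂, h2⟩
      rw [← hker, Subgroup.index_ker, MonoidHom.range_eq_top.mpr hsurj, Subgroup.card_top]
      simp
    · rw [← hker]
      refine Subgroup.normalClosure_le_normal ?_
      rintro x rfl
      change φ (s₀ * (s₁ * s₂) ^ (m - 1) * s₁) = 1
      obtain ⟨k, rfl⟩ := hodd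
      rw [Nat.add_sub_cancel, map_mul, map_mul, map_pow, map_mul, h0, h1, h2, pow_mul]
      simp only [one_mul, mul_one]
      rw [show (Multiplicative.ofAdd (1 : ZMod 2)) ^ 2 = 1 by decide, one_pow]
end
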